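/- arXiv:2405.15653 — 3 statements merged into one kernel-verified Lean document; each statement's English description precedes it below -/
import Mathlib

section
/- Let X be a locally compact Hausdorff space, A and B C*-algebras, and E a C*-correspondence from A to B; in particular E is a nondegenerate Banach A-B-bimodule. Then C₀(X,E), the Banach space of norm-continuous E-valued functions on X vanishing at infinity with supremum norm, is a nondegenerate Banach C₀(X,A)-C₀(X,B)-bimodule under pointwise actions. Let C_b^str(X, M(E)) denote the set of bounded functions ξ : X → M(E) (values in the multiplier bimodule of E) that are strictly continuous, i.e. for all f ∈ C₀(X,A) and g ∈ C₀(X,B) the functions x ↦ f(x)·ξ(x) and x ↦ ξ(x)·g(x) belong to C₀(X,E). Then the map Θ sending ξ ∈ C_b^str(X, M(E)) to the pair of maps (f ↦ (x ↦ f(x)·ξ(x)), g ↦ (x ↦ ξ(x)·g(x))) is a well-defined multiplier of the bimodule C₀(X,E), and Θ is an isometric bijection of C_b^str(X, M(E)) onto M(C₀(X,E)) which is a bimodule map (with respect to the pointwise actions) and is the unique C₀(X,A)-C₀(X,B)-bimodule map extending the canonical embedding of C₀(X,E) into M(C₀(X,E)). -/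
/-!
STATEMENT 6: For a locally compact Hausdorff space `X` and a C*-correspondence `E` from
`A` to `B`, the space `C₀(X,E)` is a nondegenerate Banach `C₀(X,A)`-`C₀(X,B)`-bimodule
for the pointwise actions, and the bounded strictly continuous functions
`X → M(E)` are in isometric bijection with the multiplier bimodule `M(C₀(X,E))` via the
pointwise-action map `Θ`, which is the unique bimodule map extending the canonical
embedding of `C₀(X,E)` into `M(C₀(X,E))`.

Bimodule actions are encoded as continuous bilinear maps (`l a ξ = a·ξ`, `r b ξ = ξ·b`).
A multiplier of a bimodule `M` is a pair `(R,L)` of bounded linear maps with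
`a·L(b) = R(a)·b`; the multiplier bimodule is the set of such pairs inside the product
of operator spaces (whose norm is `max (‖R‖, ‖L‖)`), with actions
`a·(R,L) = (a₀ ↦ R(a₀a), b₀ ↦ a·L(b₀))`, `(R,L)·b = (a₀ ↦ R(a₀)·b, b₀ ↦ L(b·b₀))` and
canonical embedding `ι(ξ) = (a ↦ a·ξ, b ↦ ξ·b)`.  Positivity of inner products in the
C*-correspondence axioms is encoded via the C*-characterisation `⟨ξ,ξ⟩ = star c * c`.
Since the set of strictly continuous bounded functions carries no a priori algebraic
structure, module properties of maps defined on it are expressed pointwise.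
-/

open scoped ZeroAtInfty

namespace Stmt6

section BimoduleDefs

variable {R : Type*} {S : Type*} {M : Type*}
variable [NonUnitalNormedRing R] [NormedSpace ℂ R] [IsScalarTower ℂ R R] [SMulCommClass ℂ R R]
variable [NonUnitalNormedRing S] [NormedSpace ℂ S] [IsScalarTower ℂ S S] [SMulCommClass ℂ S S]
variable [NormedAddCommGroup M] [NormedSpace ℂ M]
variable (l : R →L[ℂ] M →L[ℂ] M) (r : S →L[ℂ] M →L[ℂ] M)

/-- `(l, r)` makes `M` a Banach `R`-`S`-bimodule. -/
structure IsBanachBimodule : Prop where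
  lsmul_mul : ∀ a a' ξ, l (a * a') ξ = l a (l a' ξ)
  rsmul_mul : ∀ b b' ξ, r (b * b') ξ = r b' (r b ξ)
  smul_comm : ∀ a b ξ, r b (l a ξ) = l a (r b ξ)
  norm_lsmul : ∀ a ξ, ‖l a ξ‖ ≤ ‖a‖ * ‖ξ‖
  norm_rsmul : ∀ b ξ, ‖r b ξ‖ ≤ ‖b‖ * ‖ξ‖

/-- The bimodule `M` is nondegenerate. -/
def NondegenerateBimodule : Prop :=
  closure (↑(Submodule.span ℂ {y : M | ∃ a ξ, l a ξ = y}) : Set M) = Set.univ ∧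
    closure (↑(Submodule.span ℂ {y : M | ∃ b ξ, r b ξ = y}) : Set M) = Set.univ

/-- A multiplier of `M`: a pair `(R₀, L₀)` with `a·L₀(b) = R₀(a)·b`. -/
def IsMultiplier (p : (R →L[ℂ] M) × (S →L[ℂ] M)) : Prop :=
  ∀ a b, l a (p.2 b) = r b (p.1 a)

/-- The canonical map `ι : M → M(M)`. -/
noncomputable def iota (ξ : M) : (R →L[ℂ] M) × (S →L[ℂ] M) := (l.flip ξ, r.flip ξ)

/-- The left action of `R` on multiplier pairs. -/
noncomputable def aAct (a : R) (p : (R →L[ℂ] M) × (S →L[ℂ] M)) :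
    (R →L[ℂ] M) × (S →L[ℂ] M) :=
  (p.1.comp ((ContinuousLinearMap.mul ℂ R).flip a), (l a).comp p.2)

/-- The right action of `S` on multiplier pairs. -/
noncomputable def bAct (p : (R →L[ℂ] M) × (S →L[ℂ] M)) (b : S) :
    (R →L[ℂ] M) × (S →L[ℂ] M) :=
  ((r b).comp p.1, p.2.comp (ContinuousLinearMap.mul ℂ S b))

end BimoduleDefs

variable (X : Type*) [TopologicalSpace X] [LocallyCompactSpace X] [T2Space X]
variable {A B E : Type*} [NonUnitalCStarAlgebra A] [NonUnitalCStarAlgebra B]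
variable [NormedAddCommGroup E] [NormedSpace ℂ E] [CompleteSpace E]
variable (lE : A →L[ℂ] E →L[ℂ] E) (rE : B →L[ℂ] E →L[ℂ] E) (ip : E → E → B)

/-- `(lE, rE, ip)` makes `E` a C*-correspondence from `A` to `B`. -/
structure IsCStarCorrespondence : Prop where
  ip_add_right : ∀ ξ ζ η, ip ξ (ζ + η) = ip ξ ζ + ip ξ η
  ip_smul_right : ∀ (c : ℂ) ξ ζ, ip ξ (c • ζ) = c • ip ξ ζ
  ip_rsmul_right : ∀ ξ ζ b, ip ξ (rE b ζ) = ip ξ ζ * b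
  ip_star : ∀ ξ ζ, star (ip ξ ζ) = ip ζ ξ
  ip_nonneg : ∀ ξ, ∃ c, ip ξ ξ = star c * c
  ip_definite : ∀ ξ, ip ξ ξ = 0 → ξ = 0
  norm_eq : ∀ ξ, ‖ξ‖ = Real.sqrt ‖ip ξ ξ‖
  rsmul_mul : ∀ b b' ξ, rE (b * b') ξ = rE b' (rE b ξ)
  lsmul_mul : ∀ a a' ξ, lE (a * a') ξ = lE a (lE a' ξ)
  ip_lsmul : ∀ a ξ ζ, ip (lE a ξ) ζ = ip ξ (lE (star a) ζ)
  smul_comm : ∀ a b ξ, rE b (lE a ξ) = lE a (rE b ξ)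
  nondegenerate : closure (↑(Submodule.span ℂ {y : E | ∃ a ξ, lE a ξ = y}) : Set E) = Set.univ

/-- The set of bounded strictly continuous functions `X → M(E)`. -/
def Sstr : Set (X → (A →L[ℂ] E) × (B →L[ℂ] E)) :=
  {ξ | (∀ x, IsMultiplier lE rE (ξ x)) ∧ (∃ C : ℝ, ∀ x, ‖ξ x‖ ≤ C) ∧
    (∀ f : C₀(X, A), ∃ g : C₀(X, E), ∀ x, g x = (ξ x).1 (f x)) ∧
    ∀ h : C₀(X, B), ∃ g : C₀(X, E), ∀ x, g x = (ξ x).2 (h x)}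

variable {X lE rE}

/-- `Θ : C_b^str(X, M(E)) → M(C₀(X,E))` is a `C₀(X,A)`-`C₀(X,B)`-bimodule map (with
respect to the pointwise module structure of the domain and the actions `lC`, `rC`). -/
def IsBimoduleMap (lC : C₀(X, A) →L[ℂ] C₀(X, E) →L[ℂ] C₀(X, E))
    (rC : C₀(X, B) →L[ℂ] C₀(X, E) →L[ℂ] C₀(X, E))
    (Θ : ↥(Sstr X lE rE) → (C₀(X, A) →L[ℂ] C₀(X, E)) × (C₀(X, B) →L[ℂ] C₀(X, E))) : Prop :=
  (∀ ξ ξ' ξ'' : ↥(Sstr X lE rE), (∀ x, ξ''.val x = ξ.val x + ξ'.val x) →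
    Θ ξ'' = Θ ξ + Θ ξ') ∧
  (∀ (z : ℂ) (ξ ξ' : ↥(Sstr X lE rE)), (∀ x, ξ'.val x = z • ξ.val x) → Θ ξ' = z • Θ ξ) ∧
  (∀ (f : C₀(X, A)) (ξ ξ' : ↥(Sstr X lE rE)),
    (∀ x, ξ'.val x = aAct lE (f x) (ξ.val x)) → Θ ξ' = aAct lC f (Θ ξ)) ∧
  ∀ (h : C₀(X, B)) (ξ ξ' : ↥(Sstr X lE rE)),
    (∀ x, ξ'.val x = bAct rE (ξ.val x) (h x)) → Θ ξ' = bAct rC (Θ ξ) h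

/-- The restriction of `Θ` along the inclusion `C₀(X,E) ⊆ C_b^str(X, M(E))` is the
canonical embedding `C₀(X,E) → M(C₀(X,E))`. -/
def ExtendsEmbedding (lC : C₀(X, A) →L[ℂ] C₀(X, E) →L[ℂ] C₀(X, E))
    (rC : C₀(X, B) →L[ℂ] C₀(X, E) →L[ℂ] C₀(X, E))
    (Θ : ↥(Sstr X lE rE) → (C₀(X, A) →L[ℂ] C₀(X, E)) × (C₀(X, B) →L[ℂ] C₀(X, E))) : Prop :=
  ∀ (g : C₀(X, E)) (ξ : ↥(Sstr X lE rE)),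
    (∀ x, ξ.val x = iota lE rE (g x)) → Θ ξ = iota lC rC g

section Helpers

open Filter Topology

theorem ip_sub_right' {lE : A →L[ℂ] E →L[ℂ] E} {rE : B →L[ℂ] E →L[ℂ] E} {ip : E → E → B}
    (hE : IsCStarCorrespondence lE rE ip) (ξ ζ η : E) : ip ξ (ζ - η) = ip ξ ζ - ip ξ η := by
  have h := hE.ip_add_right ξ (ζ - η) η
  rw [sub_add_cancel] at h
  rw [h, add_sub_cancel_right]

theorem ip_sub_left' {lE : A →L[ℂ] E →L[ℂ] E} {rE : B →L[ℂ] E →L[ℂ] E} {ip : E → E → B}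
    (hE : IsCStarCorrespondence lE rE ip) (ξ ζ η : E) : ip (ζ - η) ξ = ip ζ ξ - ip η ξ := by
  rw [← hE.ip_star, ip_sub_right' hE, star_sub, hE.ip_star, hE.ip_star]

theorem ip_rsmul_left' {lE : A →L[ℂ] E →L[ℂ] E} {rE : B →L[ℂ] E →L[ℂ] E} {ip : E → E → B}
    (hE : IsCStarCorrespondence lE rE ip) (b : B) (ξ ζ : E) :
    ip (rE b ξ) ζ = star b * ip ξ ζ := by
  rw [← hE.ip_star, hE.ip_rsmul_right, star_mul, hE.ip_star]

theorem norm_sq' {lE : A →L[ℂ] E →L[ℂ] E} {rE : B →L[ℂ] E →L[ℂ] E} {ip : E → E → B}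
    (hE : IsCStarCorrespondence lE rE ip) (ξ : E) : ‖ξ‖ ^ 2 = ‖ip ξ ξ‖ := by
  rw [hE.norm_eq, Real.sq_sqrt (norm_nonneg _)]

theorem cauchy_schwarz {lE : A →L[ℂ] E →L[ℂ] E} {rE : B →L[ℂ] E →L[ℂ] E} {ip : E → E → B}
    (hE : IsCStarCorrespondence lE rE ip) (ξ ζ : E) : ‖ip ξ ζ‖ ≤ ‖ξ‖ * ‖ζ‖ := by
  let : PartialOrder Bᵐᵒᵖ := CStarAlgebra.spectralOrder _
  have : StarOrderedRing Bᵐᵒᵖ := CStarAlgebra.spectralOrderedRing _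
  let : SMul Bᵐᵒᵖ E := ⟨fun b ξ => rE b.unop ξ⟩
  let : CStarModule Bᵐᵒᵖ E :=
    { inner := fun x y => MulOpposite.op (ip x y)
      inner_add_right := by
        intro x y z
        simp [hE.ip_add_right]
      inner_self_nonneg := by
        intro x
        obtain ⟨c, hc⟩ := hE.ip_nonneg x
        rw [hc, MulOpposite.op_mul, MulOpposite.op_star]
        exact mul_star_self_nonneg _
      inner_self := by
        intro x
        rw [MulOpposite.op_eq_zero_iff]
        refine ⟨hE.ip_definite x, ?_⟩
        rintro rfl
        have := hE.ip_smul_right 0 0 0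
        simpa using this
      inner_op_smul_right := by
        intro a x y
        change MulOpposite.op (ip x (rE a.unop y)) = _
        rw [hE.ip_rsmul_right]
        simp
      inner_smul_right_complex := by
        intro z x y
        rw [hE.ip_smul_right]
        simp
      star_inner := by
        intro x y
        rw [← MulOpposite.op_star, hE.ip_star]
      norm_eq_sqrt_norm_inner_self := by
        intro x
        rw [hE.norm_eq, MulOpposite.norm_op] }
  have h := CStarModule.norm_inner_le (A := Bᵐᵒᵖ) E (x := ξ) (y := ζ)
  exact h

theorem norm_rE_le {lE : A →L[ℂ] E →L[ℂ] E} {rE : B →L[ℂ] E →L[ℂ] E} {ip : E → E → B}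
    (hE : IsCStarCorrespondence lE rE ip) (b : B) (ξ : E) : ‖rE b ξ‖ ≤ ‖b‖ * ‖ξ‖ := by
  refine le_of_sq_le_sq ?_ (by positivity)
  rw [norm_sq' hE, hE.ip_rsmul_right, ip_rsmul_left' hE, mul_pow, norm_sq' hE ξ]
  calc _ ≤ ‖star b‖ * ‖ip ξ ξ‖ * ‖b‖ := (norm_mul_le _ _).trans (by gcongr; exact norm_mul_le _ _)
    _ = _ := by rw [norm_star]; ring

theorem norm_lE_le {lE : A →L[ℂ] E →L[ℂ] E} {rE : B →L[ℂ] E →L[ℂ] E} {ip : E → E → B}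
    (hE : IsCStarCorrespondence lE rE ip) (a : A) (ξ : E) : ‖lE a ξ‖ ≤ ‖a‖ * ‖ξ‖ := by
  have key : ∀ (a : A) (ξ : E), ‖lE a ξ‖ ^ 2 ≤ ‖lE‖ * (‖a‖ * ‖ξ‖) ^ 2 := by
    intro a ξ
    calc ‖lE a ξ‖ ^ 2 = ‖ip ξ (lE (star a * a) ξ)‖ := by
            rw [norm_sq' hE, hE.ip_lsmul, hE.lsmul_mul]
      _ ≤ ‖ξ‖ * ‖lE (star a * a) ξ‖ := cauchy_schwarz hE _ _
      _ ≤ ‖ξ‖ * (‖lE‖ * ‖star a * a‖ * ‖ξ‖) := by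
            gcongr; exact lE.le_opNorm₂ _ _
      _ = _ := by rw [CStarRing.norm_star_mul_self]; ring
  have hn : 0 ≤ ‖lE‖ := lE.opNorm_nonneg
  have h1 : ‖lE‖ ≤ √‖lE‖ := by
    refine lE.opNorm_le_bound₂ (Real.sqrt_nonneg _) fun a ξ => ?_
    refine le_of_sq_le_sq ?_ (by positivity)
    rw [mul_assoc, mul_pow, Real.sq_sqrt hn]
    exact key a ξ
  have h2 : ‖lE‖ ≤ 1 := by
    by_contra! h
    have : ‖lE‖ ^ 2 ≤ ‖lE‖ := (Real.le_sqrt hn hn).1 h1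
    nlinarith
  calc _ ≤ ‖lE‖ * ‖a‖ * ‖ξ‖ := lE.le_opNorm₂ _ _
    _ ≤ 1 * ‖a‖ * ‖ξ‖ := by gcongr
    _ = _ := by ring

/-- Existence of a contractive approximate unit for a left action. -/
def HasAU {A E : Type*} [NonUnitalNormedRing A] [NormedSpace ℂ A]
    [NormedAddCommGroup E] [NormedSpace ℂ E] (l : A →L[ℂ] E →L[ℂ] E) : Prop :=
  ∃ F : Filter A, F.NeBot ∧ (∀ᶠ e in F, ‖e‖ ≤ 1) ∧ ∀ ξ, Tendsto (fun e => l e ξ) F (𝓝 ξ)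

theorem exists_au (A : Type*) [NonUnitalCStarAlgebra A] :
    ∃ F : Filter A, F.NeBot ∧ (∀ᶠ e in F, ‖e‖ ≤ 1) ∧ (∀ᶠ e in F, star e = e) ∧
      (∀ a, Tendsto (fun e => a * e) F (𝓝 a)) ∧ ∀ a, Tendsto (fun e => e * a) F (𝓝 a) := by
  let : PartialOrder A := CStarAlgebra.spectralOrder _
  have : StarOrderedRing A := CStarAlgebra.spectralOrderedRing _
  have h := CStarAlgebra.increasingApproximateUnit A
  exact ⟨_, h.neBot, h.eventually_norm, h.eventually_star_eq, h.tendsto_mul_left,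
    h.tendsto_mul_right⟩

theorem hasAU_mul (A : Type*) [NonUnitalCStarAlgebra A] :
    HasAU (ContinuousLinearMap.mul ℂ A).flip := by
  obtain ⟨F, h1, h2, -, h3, -⟩ := exists_au A
  exact ⟨F, h1, h2, h3⟩

theorem hasAU_mul' (A : Type*) [NonUnitalCStarAlgebra A] :
    HasAU (ContinuousLinearMap.mul ℂ A) := by
  obtain ⟨F, h1, h2, -, -, h3⟩ := exists_au A
  exact ⟨F, h1, h2, h3⟩

theorem hasAU_r {lE : A →L[ℂ] E →L[ℂ] E} {rE : B →L[ℂ] E →L[ℂ] E} {ip : E → E → B}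
    (hE : IsCStarCorrespondence lE rE ip) : HasAU rE := by
  obtain ⟨F, h1, h2, hs, h3, -⟩ := exists_au B
  refine ⟨F, h1, h2, fun ξ => ?_⟩
  rw [tendsto_iff_norm_sub_tendsto_zero]
  have hc : Tendsto (fun e => 2 * ‖ip ξ ξ * e - ip ξ ξ‖) F (𝓝 0) := by
    simpa using (tendsto_iff_norm_sub_tendsto_zero.1 (h3 (ip ξ ξ))).const_mul 2
  have hsq : Tendsto (fun e => ‖rE e ξ - ξ‖ ^ 2) F (𝓝 0) := by
    refine squeeze_zero' (Eventually.of_forall fun _ => by positivity) ?_ hc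
    filter_upwards [h2, hs] with e he hse
    have : ip (rE e ξ - ξ) (rE e ξ - ξ)
        = e * (ip ξ ξ * e - ip ξ ξ) - (ip ξ ξ * e - ip ξ ξ) := by
      rw [ip_sub_right' hE, ip_sub_left' hE, ip_sub_left' hE, ip_rsmul_left' hE,
        ip_rsmul_left' hE, hE.ip_rsmul_right, hse]
      noncomm_ring
    rw [norm_sq' hE, this, two_mul]
    refine (norm_sub_le _ _).trans ?_
    gcongr
    exact (norm_mul_le _ _).trans (mul_le_of_le_one_left (norm_nonneg _) he)
  have := hsq.sqrt
  simpa using this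

theorem hasAU_l {lE : A →L[ℂ] E →L[ℂ] E} {rE : B →L[ℂ] E →L[ℂ] E} {ip : E → E → B}
    (hE : IsCStarCorrespondence lE rE ip) : HasAU lE := by
  obtain ⟨F, h1, h2, hs, -, h3⟩ := exists_au A
  refine ⟨F, h1, h2, fun ξ => ?_⟩
  have hspan : ∀ ζ ∈ Submodule.span ℂ {y : E | ∃ a ξ, lE a ξ = y},
      Tendsto (fun e => lE e ζ) F (𝓝 ζ) := by
    intro ζ hζ
    induction hζ using Submodule.span_induction with
    | mem y hy =>
      obtain ⟨a, ξ, rfl⟩ := hy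
      have := ((lE.flip ξ).continuous.tendsto a).comp (h3 a)
      refine this.congr fun e => ?_
      simp [hE.lsmul_mul]
    | zero => simp
    | add x y _ _ hx hy => simpa using hx.add hy
    | smul c x _ hx => simpa using hx.const_smul c
  have hξ : ξ ∈ closure (↑(Submodule.span ℂ {y : E | ∃ a ξ, lE a ξ = y}) : Set E) := by
    rw [hE.nondegenerate]; trivial
  rw [Metric.tendsto_nhds]
  intro ε hε
  obtain ⟨ζ, hζ, hd⟩ := Metric.mem_closure_iff.1 hξ (ε / 3) (by positivity)
  filter_upwards [h2, Metric.tendsto_nhds.1 (hspan ζ hζ) (ε / 3) (by positivity)] with e he hz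
  rw [dist_eq_norm] at *
  have e1 : lE e ξ - ξ = lE e (ξ - ζ) + (lE e ζ - ζ) - (ξ - ζ) := by rw [map_sub]; abel
  have e2 : ‖lE e (ξ - ζ)‖ ≤ ‖ξ - ζ‖ :=
    (norm_lE_le hE _ _).trans (mul_le_of_le_one_left (norm_nonneg _) he)
  have e3 := norm_sub_le (lE e (ξ - ζ) + (lE e ζ - ζ)) (ξ - ζ)
  have e4 := norm_add_le (lE e (ξ - ζ)) (lE e ζ - ζ)
  rw [e1]
  linarith

section C0

variable {X : Type*} [TopologicalSpace X] {V W : Type*}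
variable [NonUnitalNormedRing V] [NormedSpace ℂ V]
variable [NormedAddCommGroup W] [NormedSpace ℂ W]

theorem norm_apply_le {W : Type*} [NormedAddCommGroup W] (g : C₀(X, W)) (x : X) :
    ‖g x‖ ≤ ‖g‖ := g.toBCF.norm_coe_le_norm x

theorem norm_le_of {W : Type*} [NormedAddCommGroup W] (g : C₀(X, W)) {C : ℝ} (hC : 0 ≤ C)
    (h : ∀ x, ‖g x‖ ≤ C) : ‖g‖ ≤ C := (BoundedContinuousFunction.norm_le (f := g.toBCF) hC).2 h

theorem continuous_eval_pt {W : Type*} [NormedAddCommGroup W] (x : X) :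
    Continuous fun g : C₀(X, W) => g x := by
  have h := ZeroAtInftyContinuousMap.isometry_toBCF (α := X) (β := W)
  exact (BoundedContinuousFunction.lipschitz_eval_const (β := W) x).continuous.comp h.continuous

/-- The pointwise action. -/
noncomputable def act (l : V →L[ℂ] W →L[ℂ] W) (f : C₀(X, V)) (g : C₀(X, W)) : C₀(X, W) where
  toFun x := l (f x) (g x)
  continuous_toFun := by
    have hf := map_continuous f
    have hg := map_continuous g
    fun_prop
  zero_at_infty' := by
    have h : Continuous fun p : V × W => l p.1 p.2 := by fun_prop
    have h2 := (h.tendsto (0, 0)).comp ((zero_at_infty f).prodMk_nhds (zero_at_infty g))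
    simpa [Function.comp_def] using h2

/-- The pointwise action as a continuous bilinear map. -/
noncomputable def actC (X : Type*) [TopologicalSpace X] (l : V →L[ℂ] W →L[ℂ] W) :
    C₀(X, V) →L[ℂ] C₀(X, W) →L[ℂ] C₀(X, W) :=
  LinearMap.mkContinuous₂
    (LinearMap.mk₂ ℂ (act l)
      (fun f f' g => by ext x; simp [act])
      (fun c f g => by ext x; simp [act])
      (fun f g g' => by ext x; simp [act])
      (fun c f g => by ext x; simp [act])) ‖l‖ (by
    intro f g
    refine norm_le_of _ (by have := l.opNorm_nonneg; positivity) fun x => ?_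
    have hl : 0 ≤ ‖l‖ := l.opNorm_nonneg
    refine (l.le_opNorm₂ (f x) (g x)).trans ?_
    have := norm_apply_le f x
    have := norm_apply_le g x
    gcongr)

@[simp] theorem actC_apply (l : V →L[ℂ] W →L[ℂ] W) (f : C₀(X, V)) (g : C₀(X, W)) (x : X) :
    actC X l f g x = l (f x) (g x) := rfl

/-- The elementary tensor. -/
noncomputable def tens (W : Type*) [NormedAddCommGroup W] [NormedSpace ℂ W]
    (φ : C₀(X, ℂ)) : W →ₗ[ℂ] C₀(X, W) where
  toFun w :=
    { toFun := fun x => φ x • w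
      continuous_toFun := by
        have hf := map_continuous φ
        fun_prop
      zero_at_infty' := by
        simpa using (zero_at_infty φ).smul_const w }
  map_add' v w := by ext x; simp
  map_smul' c w := by ext x; exact smul_comm (φ x) c w

@[simp] theorem tens_apply (φ : C₀(X, ℂ)) (w : W) (x : X) : tens W φ w x = φ x • w := rfl

theorem norm_tens_le (φ : C₀(X, ℂ)) (hφ : ∀ x, ‖φ x‖ ≤ 1) (w : W) : ‖tens W φ w‖ ≤ ‖w‖ := by
  refine norm_le_of _ (norm_nonneg _) fun x => ?_
  rw [tens_apply, norm_smul]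
  exact mul_le_of_le_one_left (norm_nonneg _) (hφ x)

variable [LocallyCompactSpace X] [T2Space X]

theorem exists_bump {K : Set X} (hK : IsCompact K) :
    ∃ φ : C₀(X, ℂ), (∀ x ∈ K, φ x = 1) ∧ ∀ x, ‖φ x‖ ≤ 1 := by
  obtain ⟨f, h1, -, h2, h3⟩ := exists_continuous_one_zero_of_isCompact hK isClosed_empty
    (Set.disjoint_empty K)
  refine ⟨⟨⟨fun x => (f x : ℂ), by fun_prop⟩, ?_⟩, ?_, ?_⟩
  · have h4 : Tendsto f (cocompact X) (𝓝 0) := h2.is_zero_at_infty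
    simpa [Function.comp_def] using (Complex.continuous_ofReal.tendsto 0).comp h4
  · intro x hx
    have := h1 hx
    change ((f x : ℝ) : ℂ) = 1
    rw [this]; simp
  · intro x
    change ‖((f x : ℝ) : ℂ)‖ ≤ 1
    rw [Complex.norm_real, Real.norm_eq_abs, abs_le]
    have := h3 x
    constructor <;> linarith [this.1, this.2]

theorem exists_approx {l : V →L[ℂ] W →L[ℂ] W} (hl : HasAU l)
    (hn : ∀ a ξ, ‖l a ξ‖ ≤ ‖a‖ * ‖ξ‖) (g : C₀(X, W)) {ε : ℝ} (hε : 0 < ε) :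
    ∃ f : C₀(X, V), ‖actC X l f g - g‖ ≤ ε := by
  obtain ⟨F, hF, hF1, hF2⟩ := hl
  have hev : ∀ᶠ x in cocompact X, ‖g x‖ < ε / 2 := by
    have := Metric.tendsto_nhds.1 (zero_at_infty g) (ε / 2) (by positivity)
    simpa using this
  obtain ⟨K, hK, hKg⟩ := mem_cocompact.1 hev
  obtain ⟨φ, hφ1, hφ⟩ := exists_bump hK
  have hgK : IsCompact (g '' K) := hK.image (map_continuous g)
  obtain ⟨t, ht, htf, hcov⟩ := hgK.finite_cover_balls (e := ε / 3) (by positivity)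
  have hall : ∀ᶠ e in F, ∀ ξ ∈ t, dist (l e ξ) ξ < ε / 3 :=
    (eventually_all_finite htf).2 fun ξ _ => Metric.tendsto_nhds.1 (hF2 ξ) _ (by positivity)
  obtain ⟨e, he1, he⟩ := (hF1.and hall).exists
  have hc : ∀ ξ, ‖l e ξ‖ ≤ ‖ξ‖ := fun ξ =>
    (hn e ξ).trans (mul_le_of_le_one_left (norm_nonneg _) he1)
  refine ⟨tens V φ e, norm_le_of _ hε.le fun x => ?_⟩
  rw [ZeroAtInftyContinuousMap.sub_apply, actC_apply, tens_apply]
  by_cases hx : x ∈ K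
  · rw [hφ1 x hx, one_smul]
    have := hcov (Set.mem_image_of_mem g hx)
    simp only [Set.mem_iUnion] at this
    obtain ⟨ζ, hζ, hd⟩ := this
    have hz := he ζ hζ
    rw [Metric.mem_ball] at hd
    rw [dist_eq_norm] at hd hz
    have e1 : l e (g x) - g x = l e (g x - ζ) + (l e ζ - ζ) - (g x - ζ) := by rw [map_sub]; abel
    have e2 := hc (g x - ζ)
    have e3 := norm_sub_le (l e (g x - ζ) + (l e ζ - ζ)) (g x - ζ)
    have e4 := norm_add_le (l e (g x - ζ)) (l e ζ - ζ)
    rw [e1]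
    linarith
  · have h1 : ‖g x‖ < ε / 2 := hKg hx
    have h2 : ‖l (φ x • e) (g x)‖ ≤ ‖g x‖ := by
      rw [map_smul, _root_.smul_apply, norm_smul]
      exact (mul_le_of_le_one_left (norm_nonneg _) (hφ x)).trans (hc _)
    have := norm_sub_le (l (φ x • e) (g x)) (g x)
    linarith

theorem act_dense {l : V →L[ℂ] W →L[ℂ] W} (hl : HasAU l)
    (hn : ∀ a ξ, ‖l a ξ‖ ≤ ‖a‖ * ‖ξ‖) :
    closure (↑(Submodule.span ℂ {y : C₀(X, W) | ∃ a ξ, actC X l a ξ = y}) : Set C₀(X, W))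
      = Set.univ := by
  refine Set.eq_univ_of_forall fun g => Metric.mem_closure_iff.2 fun ε hε => ?_
  obtain ⟨f, hf⟩ := exists_approx hl hn g (half_pos hε)
  refine ⟨actC X l f g, Submodule.subset_span ⟨f, g, rfl⟩, ?_⟩
  rw [dist_comm, dist_eq_norm]
  linarith

/-- Two continuous maps that agree after multiplying by anything agree. -/
theorem eq_of_act {Y : Type*} [TopologicalSpace Y] [T2Space Y]
    {l : V →L[ℂ] W →L[ℂ] W} (hl : HasAU l)
    (hn : ∀ a ξ, ‖l a ξ‖ ≤ ‖a‖ * ‖ξ‖) {S T : C₀(X, W) → Y} (hS : Continuous S)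
    (hT : Continuous T) (g : C₀(X, W)) (h : ∀ f, S (actC X l f g) = T (actC X l f g)) :
    S g = T g := by
  have hg : g ∈ closure {y | ∃ f, actC X l f g = y} := by
    refine Metric.mem_closure_iff.2 fun ε hε => ?_
    obtain ⟨f, hf⟩ := exists_approx hl hn g (half_pos hε)
    refine ⟨actC X l f g, ⟨f, rfl⟩, ?_⟩
    rw [dist_comm, dist_eq_norm]
    linarith
  have hcl : IsClosed {y | S y = T y} := isClosed_eq hS hT
  refine closure_minimal ?_ hcl hg
  rintro _ ⟨f, rfl⟩
  exact h f

theorem act_faithful {l : V →L[ℂ] W →L[ℂ] W} (hl : HasAU l)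
    (hn : ∀ a ξ, ‖l a ξ‖ ≤ ‖a‖ * ‖ξ‖) (g g' : C₀(X, W))
    (h : ∀ f, actC X l f g = actC X l f g') : g = g' := by
  rw [← sub_eq_zero]
  refine eq_of_act hl hn (S := id) (T := fun _ => 0) continuous_id continuous_const _ fun f => ?_
  simp [h]

end C0

section OneSided

variable {X : Type*} [TopologicalSpace X] [LocallyCompactSpace X] [T2Space X] {V W : Type*}
variable [NormedAddCommGroup V] [NormedSpace ℂ V]
variable [NormedAddCommGroup W] [NormedSpace ℂ W]

/-- A local operator on `C₀` is given by a field of operators. -/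
theorem exists_field (R : C₀(X, V) →L[ℂ] C₀(X, W)) (hR : ∀ f x, f x = 0 → R f x = 0) :
    ∃ ρ : X → V →L[ℂ] W, (∀ f x, ρ x (f x) = R f x) ∧ ∀ x, ‖ρ x‖ ≤ ‖R‖ := by
  have hb := fun x : X => exists_bump (isCompact_singleton (x := x))
  choose φ hφ1 hφ using hb
  have hbound : ∀ x v, ‖R (tens V (φ x) v) x‖ ≤ ‖R‖ * ‖v‖ := fun x v =>
    (norm_apply_le _ x).trans ((R.le_opNorm _).trans (by
      gcongr
      exact norm_tens_le _ (hφ x) v))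
  refine ⟨fun x => LinearMap.mkContinuous
    { toFun := fun v => R (tens V (φ x) v) x
      map_add' := fun v w => by simp
      map_smul' := fun c v => by simp } ‖R‖ (hbound x), ?_, ?_⟩
  · intro f x
    change R (tens V (φ x) (f x)) x = R f x
    have h0 : R (tens V (φ x) (f x) - f) x = 0 := by
      refine hR _ _ ?_
      simp [hφ1 x x rfl]
    rw [map_sub, ZeroAtInftyContinuousMap.sub_apply, sub_eq_zero] at h0
    exact h0
  · intro x
    exact LinearMap.mkContinuous_norm_le _ R.opNorm_nonneg _

theorem field_norm_le (R : C₀(X, V) →L[ℂ] C₀(X, W)) (ρ : X → V →L[ℂ] W)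
    (h : ∀ f x, R f x = ρ x (f x)) (x : X) : ‖ρ x‖ ≤ ‖R‖ := by
  refine (ρ x).opNorm_le_bound R.opNorm_nonneg fun v => ?_
  obtain ⟨φ, hφ1, hφ⟩ := exists_bump (isCompact_singleton (x := x))
  have := h (tens V φ v) x
  rw [tens_apply, hφ1 x rfl, one_smul] at this
  rw [← this]
  exact (norm_apply_le _ x).trans ((R.le_opNorm _).trans (by
      gcongr
      exact norm_tens_le _ hφ v))

theorem field_ext (R : C₀(X, V) →L[ℂ] C₀(X, W)) (ρ ρ' : X → V →L[ℂ] W)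
    (h : ∀ f x, R f x = ρ x (f x)) (h' : ∀ f x, R f x = ρ' x (f x)) (x : X) : ρ x = ρ' x := by
  ext v
  obtain ⟨φ, hφ1, hφ⟩ := exists_bump (isCompact_singleton (x := x))
  have h1 := h (tens V φ v) x
  have h2 := h' (tens V φ v) x
  rw [tens_apply, hφ1 x rfl, one_smul] at h1 h2
  rw [← h1, h2]

theorem op_norm_le (R : C₀(X, V) →L[ℂ] C₀(X, W)) (ρ : X → V →L[ℂ] W)
    (h : ∀ f x, R f x = ρ x (f x)) {C : ℝ} (hC : 0 ≤ C) (hρ : ∀ x, ‖ρ x‖ ≤ C) : ‖R‖ ≤ C := by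
  refine R.opNorm_le_bound hC fun f => norm_le_of _ (by positivity) fun x => ?_
  rw [h]
  refine ((ρ x).le_opNorm _).trans ?_
  have := norm_apply_le f x
  have := hρ x
  gcongr

theorem exists_op (ρ : X → V →L[ℂ] W) (hρ : ∃ C : ℝ, ∀ x, ‖ρ x‖ ≤ C)
    (h : ∀ f : C₀(X, V), ∃ g : C₀(X, W), ∀ x, g x = ρ x (f x)) :
    ∃ R : C₀(X, V) →L[ℂ] C₀(X, W), ∀ f x, R f x = ρ x (f x) := by
  obtain ⟨C, hC⟩ := hρ
  choose T hT using h
  refine ⟨LinearMap.mkContinuous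
    { toFun := T
      map_add' := fun v w => by ext x; simp [hT]
      map_smul' := fun c v => by ext x; simp [hT] } |C| ?_, hT⟩
  intro f
  refine norm_le_of _ (by positivity) fun x => ?_
  change ‖T f x‖ ≤ _
  rw [hT]
  refine ((ρ x).le_opNorm _).trans ?_
  have := norm_apply_le f x
  have := (hC x).trans (le_abs_self C)
  gcongr

end OneSided

end Helpers

variable (X lE rE)

/-- **`C_b^str(X, M(E)) ≅ M(C₀(X,E))` for a C*-correspondence `E` from `A` to `B`.** -/
theorem strictlyContinuousBounded_isomorphic_multiplier_bimodule_of_C0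
    (hE : IsCStarCorrespondence lE rE ip) :
    ∃ (lC : C₀(X, A) →L[ℂ] C₀(X, E) →L[ℂ] C₀(X, E))
      (rC : C₀(X, B) →L[ℂ] C₀(X, E) →L[ℂ] C₀(X, E)),
      -- the actions of `C₀(X,A)` and `C₀(X,B)` on `C₀(X,E)` are pointwise
      (∀ (f : C₀(X, A)) (g : C₀(X, E)) (x : X), lC f g x = lE (f x) (g x)) ∧
      (∀ (h : C₀(X, B)) (g : C₀(X, E)) (x : X), rC h g x = rE (h x) (g x)) ∧
      -- `C₀(X,E)` is a nondegenerate Banach `C₀(X,A)`-`C₀(X,B)`-bimodule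
      IsBanachBimodule lC rC ∧ NondegenerateBimodule lC rC ∧
      -- the isomorphism `Θ`
      ∃ Θ : ↥(Sstr X lE rE) → (C₀(X, A) →L[ℂ] C₀(X, E)) × (C₀(X, B) →L[ℂ] C₀(X, E)),
        -- `Θ` takes values in multipliers of `C₀(X,E)` and acts pointwise
        (∀ ξ, IsMultiplier lC rC (Θ ξ)) ∧
        (∀ (ξ : ↥(Sstr X lE rE)) (f : C₀(X, A)) (x : X), ((Θ ξ).1 f) x = (ξ.val x).1 (f x)) ∧
        (∀ (ξ : ↥(Sstr X lE rE)) (h : C₀(X, B)) (x : X), ((Θ ξ).2 h) x = (ξ.val x).2 (h x)) ∧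
        -- `Θ` is an isometric bijection onto `M(C₀(X,E))`
        Function.Injective Θ ∧
        (∀ m : (C₀(X, A) →L[ℂ] C₀(X, E)) × (C₀(X, B) →L[ℂ] C₀(X, E)),
          IsMultiplier lC rC m → ∃ ξ, Θ ξ = m) ∧
        (∀ ξ : ↥(Sstr X lE rE), ‖Θ ξ‖ = ⨆ x : X, ‖ξ.val x‖) ∧
        -- `Θ` is a bimodule map, extends the canonical embedding, and is the unique
        -- such bimodule map
        IsBimoduleMap lC rC Θ ∧ ExtendsEmbedding lC rC Θ ∧
        ∀ Ψ : ↥(Sstr X lE rE) → (C₀(X, A) →L[ℂ] C₀(X, E)) × (C₀(X, B) →L[ℂ] C₀(X, E)),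
          (∀ ξ, IsMultiplier lC rC (Ψ ξ)) → IsBimoduleMap lC rC Ψ →
            ExtendsEmbedding lC rC Ψ → Ψ = Θ := by
  have hln := norm_lE_le hE
  have hrn := norm_rE_le hE
  have hlA := hasAU_l hE
  have hrA := hasAU_r hE
  have hmA : ∀ a b : A, ‖(ContinuousLinearMap.mul ℂ A).flip a b‖ ≤ ‖a‖ * ‖b‖ := fun a b => by
    rw [mul_comm]; exact norm_mul_le b a
  have hmB : ∀ a b : B, ‖ContinuousLinearMap.mul ℂ B a b‖ ≤ ‖a‖ * ‖b‖ := norm_mul_le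
  refine ⟨actC X lE, actC X rE, fun _ _ _ => rfl, fun _ _ _ => rfl, ?_, ?_, ?_⟩
  · refine ⟨?_, ?_, ?_, ?_, ?_⟩
    · intro a a' ξ; ext x; simp [hE.lsmul_mul]
    · intro a a' ξ; ext x; simp [hE.rsmul_mul]
    · intro a b ξ; ext x; simp [hE.smul_comm]
    · intro a ξ
      refine norm_le_of _ (by positivity) fun x => (hln _ _).trans ?_
      have := norm_apply_le a x
      have := norm_apply_le ξ x
      gcongr
    · intro a ξ
      refine norm_le_of _ (by positivity) fun x => (hrn _ _).trans ?_
      have := norm_apply_le a x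
      have := norm_apply_le ξ x
      gcongr
  · exact ⟨act_dense hlA hln, act_dense hrA hrn⟩
  -- the map Θ
  have hex1 : ∀ ξ : ↥(Sstr X lE rE), ∃ R : C₀(X, A) →L[ℂ] C₀(X, E),
      ∀ f x, R f x = (ξ.val x).1 (f x) := fun ξ => by
    obtain ⟨-, ⟨C, hC⟩, h1, -⟩ := ξ.2
    exact exists_op _ ⟨C, fun x => (norm_fst_le _).trans (hC x)⟩ h1
  have hex2 : ∀ ξ : ↥(Sstr X lE rE), ∃ R : C₀(X, B) →L[ℂ] C₀(X, E),
      ∀ f x, R f x = (ξ.val x).2 (f x) := fun ξ => by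
    obtain ⟨-, ⟨C, hC⟩, -, h1⟩ := ξ.2
    exact exists_op _ ⟨C, fun x => (norm_snd_le _).trans (hC x)⟩ h1
  choose T1 hT1 using hex1
  choose T2 hT2 using hex2
  have hmult : ∀ ξ : ↥(Sstr X lE rE), IsMultiplier (actC X lE) (actC X rE) (T1 ξ, T2 ξ) := by
    intro ξ f h
    ext x
    simp only [actC_apply, hT1, hT2]
    exact ξ.2.1 x _ _
  -- module properties of multipliers of `E` and of `C₀(X, E)`
  have hM1 : ∀ m : (C₀(X, A) →L[ℂ] C₀(X, E)) × (C₀(X, B) →L[ℂ] C₀(X, E)),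
      IsMultiplier (actC X lE) (actC X rE) m → ∀ f f', m.1 (f * f') = actC X lE f (m.1 f') := by
    intro m hm f f'
    refine act_faithful hrA hrn _ _ fun h => ?_
    rw [← hm]
    ext x
    have := congrArg (fun g : C₀(X, E) => lE (f x) (g x)) (hm f' h)
    simp only [actC_apply] at this ⊢
    rw [ZeroAtInftyContinuousMap.mul_apply, hE.lsmul_mul, this, hE.smul_comm]
  have hM2 : ∀ m : (C₀(X, A) →L[ℂ] C₀(X, E)) × (C₀(X, B) →L[ℂ] C₀(X, E)),
      IsMultiplier (actC X lE) (actC X rE) m → ∀ h h', m.2 (h * h') = actC X rE h' (m.2 h) := by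
    intro m hm h h'
    refine act_faithful hlA hln _ _ fun f => ?_
    rw [hm]
    ext x
    have := congrArg (fun g : C₀(X, E) => rE (h' x) (g x)) (hm f h)
    simp only [actC_apply] at this ⊢
    rw [ZeroAtInftyContinuousMap.mul_apply, hE.rsmul_mul, ← this, hE.smul_comm]
  refine ⟨fun ξ => (T1 ξ, T2 ξ), hmult, hT1, hT2, ?_, ?_, ?_, ?_, ?_, ?_⟩
  · intro ξ ξ' h
    rw [Prod.mk.injEq] at h
    apply Subtype.ext
    funext x
    refine Prod.ext ?_ ?_
    · exact field_ext (T1 ξ) (fun x => (ξ.val x).1) (fun x => (ξ'.val x).1) (hT1 ξ)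
        (fun f x => by rw [h.1, hT1]) x
    · exact field_ext (T2 ξ) (fun x => (ξ.val x).2) (fun x => (ξ'.val x).2) (hT2 ξ)
        (fun f x => by rw [h.2, hT2]) x
  · intro m hm
    obtain ⟨ρ, hρ, hρn⟩ := exists_field m.1 (by
      intro f x hfx
      refine eq_of_act (hasAU_mul A) hmA (S := fun f => m.1 f x) (T := fun _ => 0)
        ?_ continuous_const f fun e => ?_
      · exact (continuous_eval_pt x).comp m.1.continuous
      · have : actC X (ContinuousLinearMap.mul ℂ A).flip e f = f * e := rfl
        rw [this, hM1 m hm, actC_apply, hfx]; simp)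
    obtain ⟨lam, hl, hln'⟩ := exists_field m.2 (by
      intro f x hfx
      refine eq_of_act (hasAU_mul' B) hmB (S := fun f => m.2 f x) (T := fun _ => 0)
        ?_ continuous_const f fun e => ?_
      · exact (continuous_eval_pt x).comp m.2.continuous
      · have : actC X (ContinuousLinearMap.mul ℂ B) e f = e * f := rfl
        rw [this, hM2 m hm, actC_apply, hfx]; simp)
    have hS : (fun x => (ρ x, lam x)) ∈ Sstr X lE rE := by
      refine ⟨?_, ⟨‖m‖, fun x => ?_⟩, fun f => ⟨m.1 f, fun x => (hρ f x).symm⟩,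
        fun f => ⟨m.2 f, fun x => (hl f x).symm⟩⟩
      · intro x a b
        obtain ⟨φ, hφ1, hφ⟩ := exists_bump (isCompact_singleton (x := x))
        have h1 := hρ (tens A φ a) x
        have h2 := hl (tens B φ b) x
        have h3 := congrArg (fun g : C₀(X, E) => g x) (hm (tens A φ a) (tens B φ b))
        simp only [actC_apply, tens_apply, hφ1 x rfl, one_smul] at h1 h2 h3
        change lE a (lam x b) = rE b (ρ x a)
        rw [h1, h2, h3]
      · exact max_le ((hρn x).trans (norm_fst_le m)) ((hln' x).trans (norm_snd_le m))
    refine ⟨⟨_, hS⟩, Prod.ext ?_ ?_⟩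
    · ext f x
      rw [hT1]; exact hρ f x
    · ext f x
      rw [hT2]; exact hl f x
  · intro ξ
    obtain ⟨C, hC⟩ := ξ.2.2.1
    have hbdd : BddAbove (Set.range fun x => ‖ξ.val x‖) := ⟨C, by rintro _ ⟨x, rfl⟩; exact hC x⟩
    have hnn : 0 ≤ ⨆ x, ‖ξ.val x‖ := Real.iSup_nonneg fun x => norm_nonneg _
    apply le_antisymm
    · refine max_le (op_norm_le _ _ (hT1 ξ) hnn fun x => ?_) (op_norm_le _ _ (hT2 ξ) hnn fun x => ?_)
      · exact (norm_fst_le _).trans (le_ciSup hbdd x)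
      · exact (norm_snd_le _).trans (le_ciSup hbdd x)
    · refine Real.iSup_le (fun x => ?_) (le_max_of_le_left (T1 ξ).opNorm_nonneg)
      exact max_le_max (field_norm_le (T1 ξ) _ (hT1 ξ) x) (field_norm_le (T2 ξ) _ (hT2 ξ) x)
  · refine ⟨?_, ?_, ?_, ?_⟩
    · intro ξ ξ' ξ'' h
      refine Prod.ext ?_ ?_ <;> ext f x <;> simp [hT1, hT2, h]
    · intro z ξ ξ' h
      refine Prod.ext ?_ ?_ <;> ext f x <;> simp [hT1, hT2, h]
    · intro f ξ ξ' h
      refine Prod.ext ?_ ?_ <;> ext f x <;> simp [hT1, hT2, h, aAct]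
    · intro f ξ ξ' h
      refine Prod.ext ?_ ?_ <;> ext f x <;> simp [hT1, hT2, h, bAct]
  · intro g ξ h
    refine Prod.ext ?_ ?_ <;> ext f x <;> simp [hT1, hT2, h, iota]
  · intro Ψ hΨ hΨb hΨe
    funext ξ
    -- pointwise: `f • ξ` is in the image of `C₀(X, E)`
    have hpt : ∀ (f : C₀(X, A)) (x : X), aAct lE (f x) (ξ.val x) = iota lE rE (T1 ξ f x) := by
      intro f x
      refine Prod.ext ?_ ?_
      · ext a
        obtain ⟨φ, hφ1, hφ⟩ := exists_bump (isCompact_singleton (x := x))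
        have h1 := congrArg (fun g : C₀(X, E) => g x) (hM1 _ (hmult ξ) (tens A φ a) f)
        simpa [hT1, hφ1 x rfl, aAct, iota] using h1
      · ext b
        have := ξ.2.1 x (f x) b
        simpa [hT1, aAct, iota] using this
    have hmem : ∀ f : C₀(X, A), (fun x => aAct lE (f x) (ξ.val x)) ∈ Sstr X lE rE := by
      intro f
      refine ⟨?_, ?_, ?_, ?_⟩
      · intro x a b
        simp only [hpt]
        exact (hE.smul_comm a b _).symm
      · refine ⟨‖T1 ξ f‖, fun x => ?_⟩
        simp only [hpt]
        have := norm_apply_le (T1 ξ f) x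
        refine max_le ?_ ?_
        · refine ContinuousLinearMap.opNorm_le_bound _ (norm_nonneg _) fun a => ?_
          refine (hln a _).trans ?_
          rw [mul_comm]; gcongr
        · refine ContinuousLinearMap.opNorm_le_bound _ (norm_nonneg _) fun a => ?_
          refine (hrn a _).trans ?_
          rw [mul_comm]; gcongr
      · intro f'
        exact ⟨actC X lE f' (T1 ξ f), fun x => by simp only [hpt]; rfl⟩
      · intro f'
        exact ⟨actC X rE f' (T1 ξ f), fun x => by simp only [hpt]; rfl⟩
    have hact : ∀ f, aAct (actC X lE) f (Ψ ξ) = iota (actC X lE) (actC X rE) (T1 ξ f) := by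
      intro f
      rw [← hΨb.2.2.1 f ξ ⟨_, hmem f⟩ (fun x => rfl)]
      exact hΨe (T1 ξ f) ⟨_, hmem f⟩ (hpt f)
    refine Prod.ext ?_ ?_
    · refine ContinuousLinearMap.ext fun f => ?_
      refine eq_of_act (hasAU_mul A) hmA (Ψ ξ).1.continuous (T1 ξ).continuous f fun e => ?_
      have h1 := congrArg (fun p => p.1 f) (hact e)
      have h2 := hM1 _ (hmult ξ) f e
      have : actC X (ContinuousLinearMap.mul ℂ A).flip e f = f * e := rfl
      rw [this]
      exact h1.trans h2.symm
    · refine ContinuousLinearMap.ext fun h => ?_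
      refine act_faithful hlA hln _ _ fun f => ?_
      have h1 := congrArg (fun p => p.2 h) (hact f)
      exact h1.trans (hmult ξ f h).symm

end Stmt6
end

section
/- Let A be a finite-dimensional C*-algebra, B a C*-algebra, and B₀ ⊆ B a dense *-subalgebra. Then for every completely positive map Φ : A → B and every ε > 0 there exists a completely positive map Ψ : A → B whose range is contained in B₀ and which satisfies ‖Ψ‖ = ‖Φ‖ and ‖Ψ − Φ‖ ≤ ε (operator norms). -/
/-!
STATEMENT 13: Approximation of completely positive maps out of a finite-dimensional
C*-algebra by completely positive maps with range in a dense *-subalgebra, with the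
same norm and within `ε` in operator norm.

An element of a C*-algebra (such as `Matrix (Fin n) (Fin n) A`) is positive iff it is
of the form `star x * x`; we use this as the (equivalent) encoding of positivity.
-/

/-- A linear map between C*-algebras is *completely positive* if all of its matrix
amplifications map positive elements (i.e. elements of the form `star N * N`) to
positive elements. -/
def IsCompletelyPositive {A B : Type*} [NonUnitalCStarAlgebra A] [NonUnitalCStarAlgebra B]
    (Φ : A →L[ℂ] B) : Prop :=
  ∀ (n : ℕ) (M : Matrix (Fin n) (Fin n) A), (∃ N : Matrix (Fin n) (Fin n) A, M = star N * N) →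
    ∃ P : Matrix (Fin n) (Fin n) B, M.map ⇑Φ = star P * P


open Polynomial in
/-- A linear endomorphism with nonnegative eigenvalues has nonnegative trace, and is nilpotent
if its trace vanishes. -/
lemma trace_nonneg_aux {V : Type*} [AddCommGroup V] [Module ℂ V] [FiniteDimensional ℂ V]
    (T : Module.End ℂ V)
    (h : ∀ (l : ℂ) (v : V), v ≠ 0 → T v = l • v → ∃ r : ℝ, 0 ≤ r ∧ l = r) :
    (∃ r : ℝ, 0 ≤ r ∧ LinearMap.trace ℂ V T = r) ∧
      (LinearMap.trace ℂ V T = 0 → IsNilpotent T) := by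
  have hs : T.charpoly.Splits := IsAlgClosed.splits _
  have ht := Module.End.trace_eq_sum_roots_charpoly_of_splits hs
  have hr : ∀ l ∈ T.charpoly.roots, ∃ r : ℝ, 0 ≤ r ∧ l = r := by
    intro l hl
    have h1 : T.HasEigenvalue l := by
      rw [Module.End.hasEigenvalue_iff_isRoot_charpoly]
      exact Polynomial.isRoot_of_mem_roots hl
    obtain ⟨v, hv⟩ := h1.exists_hasEigenvector
    exact h l v hv.2 hv.apply_eq_smul
  have key : ∀ s : Multiset ℂ, (∀ l ∈ s, ∃ r : ℝ, 0 ≤ r ∧ l = r) →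
      (∃ r : ℝ, 0 ≤ r ∧ s.sum = r) ∧ (s.sum = 0 → ∀ l ∈ s, l = 0) := by
    intro s
    induction s using Multiset.induction_on with
    | empty => intro _; exact ⟨⟨0, le_rfl, by simp⟩, by simp⟩
    | cons a s ih =>
      intro hs
      obtain ⟨⟨r, hr, hrs⟩, h2⟩ := ih (fun l hl => hs l (Multiset.mem_cons_of_mem hl))
      obtain ⟨q, hq, hqa⟩ := hs a (Multiset.mem_cons_self a s)
      refine ⟨⟨q + r, by positivity, by simp [hrs, hqa]⟩, ?_⟩
      intro h0 l hl
      rw [Multiset.sum_cons, hrs, hqa] at h0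
      have h0' : q + r = 0 := by exact_mod_cast h0
      have hq0 : q = 0 := by linarith
      have hr0 : r = 0 := by linarith
      rcases Multiset.mem_cons.1 hl with rfl | hl
      · simp [hqa, hq0]
      · exact h2 (by simp [hrs, hr0]) l hl
  obtain ⟨k1, k2⟩ := key _ hr
  refine ⟨by rw [ht]; exact k1, fun h0 => ?_⟩
  have h3 := k2 (ht ▸ h0)
  have h4 : T.charpoly.roots = Multiset.replicate (Multiset.card T.charpoly.roots) 0 :=
    Multiset.eq_replicate_card.2 h3
  have h5 := hs.eq_prod_roots_of_monic (LinearMap.charpoly_monic T)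
  rw [h4] at h5
  refine ⟨Multiset.card T.charpoly.roots, ?_⟩
  have h6 := LinearMap.aeval_self_charpoly T
  rw [h5] at h6
  simpa using h6

section NU
variable {A : Type*} [NonUnitalCStarAlgebra A]

lemma eig_aux (x : A) (l : ℂ) (v : A) (hv : v ≠ 0) (h : star x * x * v = l • v) :
    ∃ r : ℝ, 0 ≤ r ∧ l = r := by
  letI := CStarAlgebra.spectralOrder A
  haveI := CStarAlgebra.spectralOrderedRing A
  have hc : star v * v ≠ 0 := by rwa [Ne, CStarRing.star_mul_self_eq_zero_iff]
  have hd : star (x * v) * (x * v) = l • (star v * v) := by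
    rw [← mul_smul_comm, ← h]; simp [mul_assoc]
  have hl : star l = l := by
    have := congrArg star hd
    simp only [star_mul, star_star, star_smul] at this
    rw [star_mul] at hd
    rw [hd] at this
    exact (smul_left_injective ℂ hc this).symm
  obtain ⟨r, rfl⟩ := Complex.conj_eq_iff_real.1 hl
  refine ⟨r, ?_, rfl⟩
  by_contra hr
  push Not at hr
  have h1 : 0 ≤ star (x * v) * (x * v) := star_mul_self_nonneg _
  have h2 : 0 ≤ (-r) • (star v * v) := smul_nonneg (by linarith) (star_mul_self_nonneg _)
  rw [hd] at h1
  have h3 : ((r : ℂ) • (star v * v)) = r • (star v * v) := rfl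
  rw [h3] at h1
  rw [neg_smul, neg_nonneg] at h2
  have := le_antisymm h2 h1
  rw [smul_eq_zero] at this
  rcases this with h | h
  · exact hr.ne h
  · exact hc h

lemma nilp_aux (b : A) (hb : star b = b) (h : IsNilpotent (LinearMap.mul ℂ A b)) : b = 0 := by
  obtain ⟨k, hk⟩ := h
  have hsym : ∀ (n : ℕ) (p q : A), star p * ((LinearMap.mul ℂ A b ^ n) q)
      = star ((LinearMap.mul ℂ A b ^ n) p) * q := by
    intro n
    induction n with
    | zero => intro p q; simp
    | succ n ihn =>
      intro p q
      rw [pow_succ, Module.End.mul_apply, ihn, ← pow_succ, pow_succ', Module.End.mul_apply]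
      simp [star_mul, hb, mul_assoc]
  induction k with
  | zero =>
    have := LinearMap.congr_fun hk b
    simpa using this
  | succ k ih =>
    rcases Nat.eq_zero_or_pos k with h | h
    · subst h
      rw [← CStarRing.star_mul_self_eq_zero_iff, hb]
      have := LinearMap.congr_fun hk b
      simpa using this
    · apply ih
      ext y
      rw [LinearMap.zero_apply, ← CStarRing.star_mul_self_eq_zero_iff, ← hsym,
        ← Module.End.mul_apply, ← pow_add, show k + k = (k + 1) + (k - 1) by omega, pow_add, hk]
      simp

end NU

/-- Orthonormal bases for an inner product given by a core. -/
lemma onb_aux {V : Type*} [AddCommGroup V] [Module ℂ V] [FiniteDimensional ℂ V]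
    (core : InnerProductSpace.Core ℂ V) :
    ∃ (N : ℕ) (u : Fin N → V),
      (∀ x, x = ∑ j, core.inner (u j) x • u j) ∧
      (∀ x y, core.inner x y = ∑ m, star (core.inner (u m) x) * core.inner (u m) y) := by
  let _ : NormedAddCommGroup V := core.toNormedAddCommGroup
  let _ : InnerProductSpace ℂ V := InnerProductSpace.ofCore core.toCore
  let b := stdOrthonormalBasis ℂ V
  refine ⟨_, b, fun x => (b.sum_repr' x).symm, fun x y => ?_⟩
  have := b.sum_inner_mul_inner x y
  have h2 : core.inner x y = inner ℂ x y := rfl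
  rw [h2, ← this]
  refine Finset.sum_congr rfl fun m _ => ?_
  congr 1
  exact (core.conj_inner_symm x (b m)).symm

section NU2
variable {A : Type*} [NonUnitalCStarAlgebra A] [FiniteDimensional ℂ A]

/-- the trace of left multiplication -/
noncomputable def trL : A →ₗ[ℂ] ℂ := (LinearMap.trace ℂ A) ∘ₗ (LinearMap.mul ℂ A)

lemma trL_aux (x : A) : (∃ r : ℝ, 0 ≤ r ∧ trL (star x * x) = r) ∧
    (trL (star x * x) = 0 → x = 0) := by
  have h := trace_nonneg_aux (LinearMap.mul ℂ A (star x * x))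
    (fun l v hv h => eig_aux x l v hv (by simpa using h))
  refine ⟨h.1, fun h0 => ?_⟩
  rw [← CStarRing.star_mul_self_eq_zero_iff]
  exact nilp_aux _ (by simp) (h.2 h0)

lemma trL_im (x : A) : (trL (star x * x)).im = 0 := by
  obtain ⟨r, _, h⟩ := (trL_aux x).1
  simp [h]

lemma trL_symm (x y : A) : star (trL (star y * x)) = trL (star x * y) := by
  have hx := trL_im x
  have hy := trL_im y
  have h1 := trL_im (x + y)
  have h2 := trL_im (x + Complex.I • y)
  simp only [star_add, star_smul, add_mul, mul_add, map_add, smul_mul_assoc, mul_smul_comm,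
    map_smul, Complex.add_im, smul_eq_mul] at h1 h2
  simp at h2
  apply Complex.ext
  · simp
    linarith
  · simp
    linarith

/-- The trace inner product. -/
@[reducible]
noncomputable def trCore : InnerProductSpace.Core ℂ A where
  inner x y := trL (star x * y)
  conj_inner_symm x y := trL_symm x y
  re_inner_nonneg x := by
    obtain ⟨r, hr, h⟩ := (trL_aux x).1
    simpa [h] using hr
  add_left x y z := by simp [add_mul]
  smul_left x y r := by simp [smul_mul_assoc]
  definite x h := (trL_aux x).2 h

lemma rep_aux (A : Type*) [NonUnitalCStarAlgebra A] [FiniteDimensional ℂ A] :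
    ∃ (N : ℕ) (u : Fin N → A) (c : Fin N → Fin N → (A →ₗ[ℂ] ℂ)),
      (∀ a i, a * u i = ∑ j, c j i a • u j) ∧
      (∀ a i j, c j i (star a) = star (c i j a)) ∧
      (∀ a b i j, c j i (star a * b) = ∑ m, star (c m j a) * c m i b) ∧
      (∀ a : A, a ∈ Submodule.span ℂ (Set.range u)) := by
  obtain ⟨N, u, h1, h2⟩ := onb_aux (trCore (A := A))
  refine ⟨N, u, fun j i => trL ∘ₗ LinearMap.mul ℂ A (star (u j)) ∘ₗ (LinearMap.mul ℂ A).flip (u i),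
    fun a i => h1 _, fun a i j => ?_, fun a b i j => ?_, fun a => ?_⟩
  · simp only [LinearMap.comp_apply, LinearMap.mul_apply', LinearMap.flip_apply]
    rw [trL_symm]
    simp [mul_assoc]
  · have this : trL (star (a * u j) * (b * u i)) = ∑ m, star (trL (star (u m) * (a * u j))) *
        trL (star (u m) * (b * u i)) := h2 (a * u j) (b * u i)
    simp only [LinearMap.comp_apply, LinearMap.mul_apply', LinearMap.flip_apply]
    rw [← this]
    simp [mul_assoc]
  · rw [h1 a]
    exact Submodule.sum_mem _ fun j _ => Submodule.smul_mem _ _ (Submodule.subset_span ⟨j, rfl⟩)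

/-- Key decomposition. -/
lemma decomp_aux (A : Type*) [NonUnitalCStarAlgebra A] [FiniteDimensional ℂ A] :
    ∃ (N : ℕ) (W : Matrix (Fin N) (Fin N) A) (c : Fin N → Fin N → (A →ₗ[ℂ] ℂ)),
      (∀ a b i j, c j i (star a * b) = ∑ m, star (c m j a) * c m i b) ∧
      (∀ a, a = ∑ j, ∑ i, c j i a • (star W * W) j i) := by
  obtain ⟨N, u, c, h1, h2, h3, h4⟩ := rep_aux A
  set z : A := ∑ i, u i * star (u i) with hz
  have hzs : star z = z := by simp [hz, star_sum]
  have haz : ∀ a, a * z = ∑ j, ∑ i, c j i a • (u j * star (u i)) := by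
    intro a
    rw [hz, Finset.mul_sum, Finset.sum_comm]
    refine Finset.sum_congr rfl fun i _ => ?_
    rw [← mul_assoc, h1, Finset.sum_mul]
    simp only [smul_mul_assoc]
  have hza : ∀ a, z * a = a * z := by
    intro a
    have h5 := congrArg star (haz (star a))
    rw [star_mul, hzs, star_star] at h5
    rw [h5, haz, star_sum, Finset.sum_comm]
    simp only [star_sum]
    refine Finset.sum_congr rfl fun i _ => Finset.sum_congr rfl fun j _ => ?_
    rw [star_smul, h2]
    simp
  have hinj : ∀ a, z * a = 0 → a = 0 := by
    intro a ha
    let _ := CStarAlgebra.spectralOrder A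
    have _ := CStarAlgebra.spectralOrderedRing A
    have h5 : ∑ i, star (star (u i) * a) * (star (u i) * a) = 0 := by
      have : star a * (z * a) = 0 := by rw [ha, mul_zero]
      rw [← this, hz, Finset.sum_mul, Finset.mul_sum]
      simp [mul_assoc]
    have h6 := (Finset.sum_eq_zero_iff_of_nonneg (fun i _ => star_mul_self_nonneg _)).1 h5
    have h7 : ∀ i, star (u i) * a = 0 := fun i => by
      rw [← CStarRing.star_mul_self_eq_zero_iff]; exact h6 i (Finset.mem_univ _)
    have h8 : ∀ b : A, star a * b = 0 := by
      intro b
      have : Submodule.span ℂ (Set.range u) ≤ LinearMap.ker (LinearMap.mul ℂ A (star a)) := by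
        rw [Submodule.span_le]
        rintro _ ⟨i, rfl⟩
        have := congrArg star (h7 i)
        simpa using this
      simpa using this (h4 b)
    exact (CStarRing.star_mul_self_eq_zero_iff a).1 (h8 a)
  have hsurj : Function.Surjective (LinearMap.mul ℂ A z) := by
    apply LinearMap.surjective_of_injective
    rw [injective_iff_map_eq_zero]
    exact hinj
  obtain ⟨e, he⟩ := hsurj z
  obtain ⟨y, hy⟩ := hsurj e
  simp only [LinearMap.mul_apply'] at he hy
  have hre : ∀ a, a * e = a := by
    intro a
    obtain ⟨b, hb⟩ := hsurj a
    simp only [LinearMap.mul_apply'] at hb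
    rw [← hb, hza, mul_assoc, he]
  have hes : star e = e := by
    have h5 : star e * e = star e := hre _
    have h6 := congrArg star h5
    simp only [star_mul, star_star] at h6
    rw [← h5, h6]
  have hle : ∀ a, e * a = a := by
    intro a
    have := congrArg star (hre (star a))
    simpa [hes] using this
  have hzy : z * star y = e := by
    have := congrArg star hy
    rw [star_mul, hzs, hes] at this
    rw [hza, this]
  refine ⟨N, Matrix.of fun k i => star (y * u i * u k), c, h3, fun a => ?_⟩
  have hW : ∀ j i, (star (Matrix.of fun k i => star (y * u i * u k)) *
      (Matrix.of fun k i => star (y * u i * u k)) : Matrix (Fin N) (Fin N) A) j i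
      = u j * star (u i) * star y := by
    intro j i
    rw [Matrix.mul_apply]
    simp only [Matrix.star_apply, Matrix.of_apply, star_star]
    calc ∑ k, y * u j * u k * star (y * u i * u k)
        = y * u j * z * (star (u i) * star y) := by
          rw [hz, Finset.mul_sum, Finset.sum_mul]
          simp [mul_assoc]
      _ = (z * y) * u j * (star (u i) * star y) := by
          rw [mul_assoc y, ← hza, hza y]
          simp only [mul_assoc]
      _ = _ := by rw [hy, hle, mul_assoc]
  simp only [hW]
  have h9 : a * z * star y = a := by rw [mul_assoc, hzy, hre]
  conv_lhs => rw [← h9, haz]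
  simp only [Finset.sum_mul, smul_mul_assoc]

end NU2

section CP
variable {A B : Type*} [NonUnitalCStarAlgebra A] [NonUnitalCStarAlgebra B]

lemma sum_sq_gen {C : Type*} [NonUnitalCStarAlgebra C] {ι : Type*} (s : Finset ι) (R : ι → C) :
    ∃ P : C, ∑ k ∈ s, star (R k) * R k = star P * P := by
  let _ := CStarAlgebra.spectralOrder C
  have _ := CStarAlgebra.spectralOrderedRing C
  exact CStarAlgebra.nonneg_iff_eq_star_mul_self.1
    (Finset.sum_nonneg fun k _ => star_mul_self_nonneg _)

/-- Finite sums of elements `star R * R` of the matrix algebra are again of this form. -/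
lemma sum_sq_aux {n : ℕ} {ι : Type*} (s : Finset ι) (R : ι → Matrix (Fin n) (Fin n) B) :
    ∃ P : Matrix (Fin n) (Fin n) B, ∑ k ∈ s, star (R k) * R k = star P * P := by
  let _ := CStarAlgebra.spectralOrder B
  have _ := CStarAlgebra.spectralOrderedRing B
  obtain ⟨P, hP⟩ := sum_sq_gen (C := CStarMatrix (Fin n) (Fin n) B) s
    (fun k => CStarMatrix.ofMatrix (R k))
  exact ⟨CStarMatrix.ofMatrix.symm P, hP⟩

/-- The map built from coefficients and a matrix over `B`. -/
noncomputable def mkCP {N : ℕ} (c : Fin N → Fin N → (A →L[ℂ] ℂ)) (Q : Fin N → Fin N → B) :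
    A →L[ℂ] B :=
  ∑ j, ∑ i, ∑ l, (c j i).smulRight (star (Q l j) * Q l i)

lemma mkCP_apply {N : ℕ} (c : Fin N → Fin N → (A →L[ℂ] ℂ)) (Q : Fin N → Fin N → B) (a : A) :
    mkCP c Q a = ∑ j, ∑ i, ∑ l, c j i a • (star (Q l j) * Q l i) := by
  simp [mkCP]

lemma mkCP_cp {N : ℕ} (c : Fin N → Fin N → (A →L[ℂ] ℂ)) (Q : Fin N → Fin N → B)
    (hc : ∀ a b i j, c j i (star a * b) = ∑ m, star (c m j a) * c m i b) :
    IsCompletelyPositive (mkCP c Q) := by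
  rintro n _ ⟨Y, rfl⟩
  obtain ⟨P, hP⟩ := sum_sq_aux (Finset.univ : Finset (Fin N × Fin N))
    (fun k => (Matrix.of fun r t => ∑ i, c k.1 i (Y r t) • Q k.2 i : Matrix (Fin n) (Fin n) B))
  refine ⟨P, ?_⟩
  rw [← hP]
  ext s t
  rw [Matrix.map_apply, Matrix.sum_apply, Matrix.mul_apply, map_sum]
  simp only [Matrix.mul_apply, Matrix.star_apply, Matrix.of_apply]
  rw [Finset.sum_comm]
  refine Finset.sum_congr rfl fun r _ => ?_
  rw [mkCP_apply, Fintype.sum_prod_type]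
  simp only [hc, Finset.sum_smul]
  calc ∑ j, ∑ i, ∑ l, ∑ m, (star (c m j (Y r s)) * c m i (Y r t)) • (star (Q l j) * Q l i)
      = ∑ j, ∑ i, ∑ m, ∑ l, (star (c m j (Y r s)) * c m i (Y r t)) • (star (Q l j) * Q l i) :=
        Finset.sum_congr rfl fun j _ => Finset.sum_congr rfl fun i _ => Finset.sum_comm
    _ = ∑ m, ∑ l, ∑ j, ∑ i,
        (star (c m j (Y r s)) * c m i (Y r t)) • (star (Q l j) * Q l i) := by
        simp only [← Finset.sum_product']
        exact Finset.sum_bij' (fun x _ => (x.2.2.1, x.2.2.2, x.1, x.2.1))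
          (fun x _ => (x.2.2.1, x.2.2.2, x.1, x.2.1)) (by simp) (by simp) (by simp) (by simp)
          (by simp)
    _ = _ := by
        refine Finset.sum_congr rfl fun m _ => Finset.sum_congr rfl fun l _ => ?_
        rw [star_sum, Finset.sum_mul_sum]
        refine Finset.sum_congr rfl fun j _ => Finset.sum_congr rfl fun i _ => ?_
        rw [star_smul, smul_mul_assoc, mul_smul_comm, smul_smul]

lemma mkCP_cont {N : ℕ} (c : Fin N → Fin N → (A →L[ℂ] ℂ)) :
    Continuous (fun Q : Fin N → Fin N → B => mkCP c Q) := by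
  unfold mkCP
  refine continuous_finsetSum _ fun j _ => continuous_finsetSum _ fun i _ =>
    continuous_finsetSum _ fun l _ => ?_
  have h : Continuous (fun b : B => (c j i).smulRight b) :=
    (ContinuousLinearMap.smulRightL ℂ A B (c j i)).continuous
  exact h.comp (by fun_prop)

lemma cp_smul (Φ : A →L[ℂ] B) (h : IsCompletelyPositive Φ) (r : ℝ) (hr : 0 ≤ r) :
    IsCompletelyPositive ((r : ℂ) • Φ) := by
  intro n M hM
  obtain ⟨P, hP⟩ := h n M hM
  refine ⟨((√r : ℝ) : ℂ) • P, ?_⟩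
  have h1 : M.map ⇑((r : ℂ) • Φ) = (r : ℂ) • M.map ⇑Φ := by ext; simp
  have h2 : (r : ℂ) = ((√r : ℝ) : ℂ) * ((√r : ℝ) : ℂ) := by
    rw [← Complex.ofReal_mul, Real.mul_self_sqrt hr]
  have h3 : star (((√r : ℝ) : ℂ)) = ((√r : ℝ) : ℂ) := Complex.conj_ofReal _
  rw [h1, hP, star_smul, h3, Matrix.smul_mul, Matrix.mul_smul, smul_smul, ← h2]

end CP

theorem cp_approx_by_cp_into_dense_starSubalgebra
    {A B : Type*} [NonUnitalCStarAlgebra A] [NonUnitalCStarAlgebra B]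
    [FiniteDimensional ℂ A]
    (B₀ : NonUnitalStarSubalgebra ℂ B) (hB₀ : Dense (B₀ : Set B))
    (Φ : A →L[ℂ] B) (hΦ : IsCompletelyPositive Φ) (ε : ℝ) (hε : 0 < ε) :
    ∃ Ψ : A →L[ℂ] B, IsCompletelyPositive Ψ ∧ (∀ a : A, Ψ a ∈ B₀) ∧
      ‖Ψ‖ = ‖Φ‖ ∧ ‖Ψ - Φ‖ ≤ ε := by
  by_cases h0 : Φ = 0
  · subst h0
    exact ⟨0, hΦ, fun a => by simp, rfl, by simpa using hε.le⟩
  have hpos : 0 < ‖Φ‖ := norm_pos_iff.2 h0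
  obtain ⟨N, W, c', hc', hdec⟩ := decomp_aux A
  let c : Fin N → Fin N → (A →L[ℂ] ℂ) := fun j i => LinearMap.toContinuousLinearMap (c' j i)
  obtain ⟨P, hP⟩ := hΦ N _ ⟨W, rfl⟩
  have hΦP : mkCP c (fun l i => P l i) = Φ := by
    ext a
    rw [mkCP_apply]
    conv_rhs => rw [hdec a]
    simp only [map_sum, map_smul]
    refine Finset.sum_congr rfl fun j _ => Finset.sum_congr rfl fun i _ => ?_
    have h1 : Φ ((star W * W) j i) = ∑ l, star (P l j) * P l i := congrFun (congrFun hP j) i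
    rw [h1, Finset.smul_sum]
    rfl
  set δ := min (ε / 2) (‖Φ‖ / 2) with hδ
  have hδ0 : 0 < δ := by positivity
  have hdense : Dense (Set.pi Set.univ fun _ : Fin N => Set.pi Set.univ fun _ : Fin N =>
      (B₀ : Set B)) := dense_pi _ fun _ _ => dense_pi _ fun _ _ => hB₀
  obtain ⟨Q, hQ, hQδ⟩ : ∃ Q : Fin N → Fin N → B, (∀ l i, Q l i ∈ B₀) ∧ ‖mkCP c Q - Φ‖ < δ := by
    have hopen : IsOpen {Q : Fin N → Fin N → B | ‖mkCP c Q - Φ‖ < δ} :=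
      isOpen_lt ((mkCP_cont c).sub continuous_const).norm continuous_const
    obtain ⟨Q, h1, h2⟩ := hdense.inter_open_nonempty _ hopen
      ⟨fun l i => P l i, by simp [hΦP, hδ0]⟩
    exact ⟨Q, fun l i => h2 l trivial i trivial, h1⟩
  set Ψ := mkCP c Q with hΨ
  have hle : |‖Ψ‖ - ‖Φ‖| < δ := (abs_norm_sub_norm_le _ _).trans_lt hQδ
  have hδ1 : δ ≤ ε / 2 := min_le_left _ _
  have hδ2 : δ ≤ ‖Φ‖ / 2 := min_le_right _ _
  have hΨpos : 0 < ‖Ψ‖ := by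
    have := (abs_lt.1 hle).1
    linarith
  refine ⟨((‖Φ‖ / ‖Ψ‖ : ℝ) : ℂ) • Ψ, cp_smul _ (mkCP_cp c Q hc') _ (by positivity),
    fun a => ?_, ?_, ?_⟩
  · have : Ψ a ∈ B₀ := by
      rw [hΨ, mkCP_apply]
      exact sum_mem fun j _ => sum_mem fun i _ => sum_mem fun l _ =>
        SMulMemClass.smul_mem _ (mul_mem (star_mem (hQ l j)) (hQ l i))
    exact SMulMemClass.smul_mem _ this
  · rw [norm_smul, Complex.norm_real, Real.norm_of_nonneg (by positivity)]
    field_simp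
  · have h1 : ‖((‖Φ‖ / ‖Ψ‖ : ℝ) : ℂ) • Ψ - Ψ‖ = |‖Ψ‖ - ‖Φ‖| := by
      have : ((‖Φ‖ / ‖Ψ‖ : ℝ) : ℂ) • Ψ - Ψ = ((‖Φ‖ / ‖Ψ‖ - 1 : ℝ) : ℂ) • Ψ := by
        push_cast
        rw [sub_smul, one_smul]
      rw [this, norm_smul, Complex.norm_real, Real.norm_eq_abs, ← abs_of_pos hΨpos, ← abs_mul,
        abs_of_pos hΨpos, abs_sub_comm]
      congr 1
      field_simp
    calc ‖((‖Φ‖ / ‖Ψ‖ : ℝ) : ℂ) • Ψ - Φ‖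
        ≤ ‖((‖Φ‖ / ‖Ψ‖ : ℝ) : ℂ) • Ψ - Ψ‖ + ‖Ψ - Φ‖ := norm_sub_le_norm_sub_add_norm_sub _ _ _
      _ ≤ ε := by rw [h1]; linarith
end

section
/- Let A and B be C*-algebras, n ≥ 1 an integer, and let E be a C*-correspondence from A to the C*-algebra Matₙ(B) of n×n matrices over B. Then there exist a C*-correspondence F from A to B and a bijective ℂ-linear map Ψ : E → Fⁿ (the space of n-tuples of elements of F) such that for all e, e' ∈ E, a ∈ A and M = (M_{ij}) ∈ Matₙ(B): (i) the (i,j) entry of the Matₙ(B)-valued inner product ⟨e, e'⟩ equals ⟨Ψ(e)_i, Ψ(e')_j⟩_B; (ii) Ψ(a·e)_i = a·Ψ(e)_i for each i; (iii) Ψ(e·M)_i = ∑_{j=1}^n Ψ(e)_j·M_{ji} for each i. In other words, up to unitary equivalence every C*-correspondence from A to Matₙ(B) arises as the n-fold direct sum ⊕ⁿF of a C*-correspondence F from A to B, equipped with the canonical matrix operations. -/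
/-!
STATEMENT 14: Every C*-correspondence from a C*-algebra `A` to the matrix C*-algebra
`Matₙ(B)` is (up to unitary equivalence) the `n`-fold direct sum `Fⁿ` of a
C*-correspondence `F` from `A` to `B`, with the canonical matrix operations.

The C*-norm of a matrix `M ∈ Matₙ(B)` is the operator norm of `M` acting on the Hilbert
`B`-module of columns `Bⁿ`; this is the function `cstarMatNorm` below, and it is used to
state the norm compatibility on the correspondence `E` from `A` to `Matₙ(B)`.
Positivity of inner products is encoded via the C*-characterisation `x = star c * c`.
-/

namespace Stmt14

universe u v

/-- A C*-correspondence from `A` to a C*-algebra `C` whose C*-norm function is `nC`. -/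
structure Correspondence (A : Type u) (C : Type v) [NonUnitalRing A] [StarRing A]
    [NonUnitalRing C] [StarRing C] [Module ℂ C] (nC : C → ℝ) where
  /-- the underlying space -/
  carrier : Type (max u v)
  [instNormed : NormedAddCommGroup carrier]
  [instModule : NormedSpace ℂ carrier]
  [instComplete : CompleteSpace carrier]
  /-- the left action of `A` -/
  lsmul : A → carrier → carrier
  /-- the right action of `C` -/
  rsmul : carrier → C → carrier
  /-- the `C`-valued inner product -/
  ip : carrier → carrier → C
  ip_add_right : ∀ ξ ζ η, ip ξ (ζ + η) = ip ξ ζ + ip ξ η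
  ip_smul_right : ∀ (c : ℂ) ξ ζ, ip ξ (c • ζ) = c • ip ξ ζ
  ip_rsmul_right : ∀ ξ ζ b, ip ξ (rsmul ζ b) = ip ξ ζ * b
  ip_star : ∀ ξ ζ, star (ip ξ ζ) = ip ζ ξ
  ip_nonneg : ∀ ξ, ∃ c, ip ξ ξ = star c * c
  ip_definite : ∀ ξ, ip ξ ξ = 0 → ξ = 0
  norm_eq : ∀ ξ, ‖ξ‖ = Real.sqrt (nC (ip ξ ξ))
  rsmul_add_left : ∀ ξ ζ b, rsmul (ξ + ζ) b = rsmul ξ b + rsmul ζ b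
  rsmul_add_right : ∀ ξ b b', rsmul ξ (b + b') = rsmul ξ b + rsmul ξ b'
  rsmul_rsmul : ∀ ξ b b', rsmul (rsmul ξ b) b' = rsmul ξ (b * b')
  lsmul_add : ∀ a ξ ζ, lsmul a (ξ + ζ) = lsmul a ξ + lsmul a ζ
  lsmul_smul : ∀ a (c : ℂ) ξ, lsmul a (c • ξ) = c • lsmul a ξ
  lsmul_add_left : ∀ a a' ξ, lsmul (a + a') ξ = lsmul a ξ + lsmul a' ξ
  lsmul_lsmul : ∀ a a' ξ, lsmul (a * a') ξ = lsmul a (lsmul a' ξ)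
  lsmul_bounded : ∀ a, ∃ M : ℝ, ∀ ξ, ‖lsmul a ξ‖ ≤ M * ‖ξ‖
  ip_lsmul : ∀ a ξ ζ, ip (lsmul a ξ) ζ = ip ξ (lsmul (star a) ζ)
  lsmul_rsmul : ∀ a ξ b, lsmul a (rsmul ξ b) = rsmul (lsmul a ξ) b
  nondegenerate : closure (↑(Submodule.span ℂ {y : carrier | ∃ a ξ, lsmul a ξ = y}) : Set carrier)
    = Set.univ

attribute [instance] Correspondence.instNormed Correspondence.instModule
  Correspondence.instComplete

/-- The (unique) C*-norm on `Matₙ(B)`: the operator norm of a matrix acting on the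
Hilbert `B`-module `Bⁿ` of columns, where `‖v‖ = ‖∑ᵢ vᵢ* vᵢ‖^{1/2}` for `v ∈ Bⁿ`. -/
noncomputable def cstarMatNorm {B : Type v} [NonUnitalNormedRing B] [StarRing B] {n : ℕ}
    (M : Matrix (Fin n) (Fin n) B) : ℝ :=
  sSup {r : ℝ | ∃ v : Fin n → B, ‖∑ i, star (v i) * v i‖ ≤ 1 ∧
    r = Real.sqrt ‖∑ i, star (∑ j, M i j * v j) * (∑ j, M i j * v j)‖}

variable {A : Type u} [NonUnitalCStarAlgebra A] {B : Type v} [NonUnitalCStarAlgebra B]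


section helpers

lemma cstarMatNorm_eq [PartialOrder B] [StarOrderedRing B] {n : ℕ}
    (M : Matrix (Fin n) (Fin n) B) :
    cstarMatNorm M = ‖CStarMatrix.toCLM (CStarMatrix.ofMatrix (star M))‖ := by
  rw [← ContinuousLinearMap.sSup_unitClosedBall_eq_norm, cstarMatNorm]
  have key : ∀ v : Fin n → B, ‖(WithCStarModule.equiv B (Fin n → B)).symm (star v)‖
      = Real.sqrt ‖∑ i, star (v i) * v i‖ := by
    intro v
    rw [WithCStarModule.pi_norm]
    simp [WithCStarModule.inner_def]
  congr 1
  ext r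
  constructor
  · rintro ⟨v, hv, rfl⟩
    refine ⟨(WithCStarModule.equiv B (Fin n → B)).symm (star v), ?_, ?_⟩
    · simp only [Metric.mem_closedBall, dist_zero_right]
      rw [key]
      exact Real.sqrt_le_one.mpr hv
    · simp only []
      rw [← key (fun i => ∑ j, M i j * v j), CStarMatrix.toCLM_apply_eq_sum]
      congr 2
      funext j
      simp [Matrix.star_apply]
  · rintro ⟨w, hw, rfl⟩
    obtain ⟨v, rfl⟩ : ∃ v : Fin n → B, w = (WithCStarModule.equiv B (Fin n → B)).symm (star v) :=
      ⟨star (WithCStarModule.equiv B (Fin n → B) w), by simp⟩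
    refine ⟨v, ?_, ?_⟩
    · simp only [Metric.mem_closedBall, dist_zero_right] at hw
      rw [key] at hw
      exact Real.sqrt_le_one.mp hw
    · simp only []
      rw [← key (fun i => ∑ j, M i j * v j), CStarMatrix.toCLM_apply_eq_sum]
      congr 2
      funext j
      simp [Matrix.star_apply]

lemma norm_entry_le {n : ℕ} (M : Matrix (Fin n) (Fin n) B) (i j : Fin n) :
    ‖M i j‖ ≤ cstarMatNorm M := by
  let _ := CStarAlgebra.spectralOrder B
  have _ := CStarAlgebra.spectralOrderedRing B
  rw [cstarMatNorm_eq, ← CStarMatrix.norm_def]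
  have := CStarMatrix.norm_entry_le_norm (M := CStarMatrix.ofMatrix (star M)) (i := j) (j := i)
  simpa [Matrix.star_apply] using this

lemma cstarMatNorm_single {n : ℕ} (M : Matrix (Fin n) (Fin n) B) (o : Fin n)
    (h : ∀ k l, k ≠ o ∨ l ≠ o → M k l = 0) : cstarMatNorm M = ‖M o o‖ := by
  let _ := CStarAlgebra.spectralOrder B
  have _ := CStarAlgebra.spectralOrderedRing B
  apply le_antisymm _ (norm_entry_le M o o)
  apply csSup_le
  · exact ⟨_, 0, by simp, rfl⟩
  rintro r ⟨v, hv, rfl⟩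
  have h1 : ∀ i, ∑ j, M i j * v j = if i = o then M o o * v o else 0 := by
    intro i
    split_ifs with hi
    · subst hi
      rw [Finset.sum_eq_single i]
      · intro l _ hl
        rw [h _ _ (Or.inr hl), zero_mul]
      · simp
    · exact Finset.sum_eq_zero fun l _ => by rw [h _ _ (Or.inl hi), zero_mul]
  have h2 : ∑ i, star (∑ j, M i j * v j) * (∑ j, M i j * v j)
      = star (M o o * v o) * (M o o * v o) := by
    rw [Finset.sum_eq_single o]
    · simp [h1]
    · intro l _ hl
      simp [h1, hl]
    · simp
  rw [h2, CStarRing.norm_star_mul_self, Real.sqrt_mul_self (norm_nonneg _)]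
  have h3 : ‖v o‖ * ‖v o‖ ≤ 1 := by
    rw [← CStarRing.norm_star_mul_self]
    refine le_trans ?_ hv
    refine CStarAlgebra.norm_le_norm_of_nonneg_of_le (star_mul_self_nonneg _) ?_
    exact Finset.single_le_sum (f := fun i => star (v i) * v i)
      (fun j _ => star_mul_self_nonneg _) (Finset.mem_univ o)
  have h4 : ‖v o‖ ≤ 1 := by nlinarith [norm_nonneg (v o)]
  calc ‖M o o * v o‖ ≤ ‖M o o‖ * ‖v o‖ := norm_mul_le _ _
    _ ≤ ‖M o o‖ * 1 := by gcongr
    _ = _ := mul_one _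

variable {n : ℕ} (E : Correspondence A (Matrix (Fin n) (Fin n) B) cstarMatNorm)

namespace Correspondence

lemma ip_add_left (x y z : E.carrier) : E.ip (x + y) z = E.ip x z + E.ip y z := by
  rw [← E.ip_star, E.ip_add_right, star_add, E.ip_star, E.ip_star]

lemma ip_rsmul_left (x y : E.carrier) (M) : E.ip (E.rsmul x M) y = star M * E.ip x y := by
  rw [← E.ip_star, E.ip_rsmul_right, star_mul, E.ip_star]

lemma ip_smul_left (c : ℂ) (x y : E.carrier) : E.ip (c • x) y = star c • E.ip x y := by
  rw [← E.ip_star, E.ip_smul_right, star_smul, E.ip_star]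

/-- The inner product as a linear map in the second variable. -/
def ipₗ (x : E.carrier) : E.carrier →ₗ[ℂ] Matrix (Fin n) (Fin n) B where
  toFun := E.ip x
  map_add' := E.ip_add_right x
  map_smul' c := E.ip_smul_right c x

lemma ip_sub_right (x y z : E.carrier) : E.ip x (y - z) = E.ip x y - E.ip x z :=
  map_sub (E.ipₗ x) y z

lemma ip_zero_right (x : E.carrier) : E.ip x 0 = 0 := map_zero (E.ipₗ x)

lemma ip_sum_right {ι : Type*} (s : Finset ι) (x : E.carrier) (f : ι → E.carrier) :
    E.ip x (∑ i ∈ s, f i) = ∑ i ∈ s, E.ip x (f i) := map_sum (E.ipₗ x) f s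

lemma ext_ip {x y : E.carrier} (h : ∀ z k l, E.ip z x k l = E.ip z y k l) : x = y := by
  rw [← sub_eq_zero]
  apply E.ip_definite
  rw [ip_sub_right, sub_eq_zero]
  ext k l
  exact h _ k l

lemma norm_entry_le_sq (x : E.carrier) (k l : Fin n) : ‖E.ip x x k l‖ ≤ ‖x‖ ^ 2 := by
  have h := norm_entry_le (E.ip x x) k l
  rw [E.norm_eq, Real.sq_sqrt ((norm_nonneg _).trans h)]
  exact h

lemma polar (x y : E.carrier) : (4 : ℂ) • E.ip x y =
    E.ip (y + x) (y + x) - E.ip (y - x) (y - x)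
      + Complex.I • E.ip (y + Complex.I • x) (y + Complex.I • x)
      - Complex.I • E.ip (y + (-Complex.I) • x) (y + (-Complex.I) • x) := by
  have e1 : y - x = y + (-1 : ℂ) • x := by simp [sub_eq_add_neg]
  rw [e1]
  simp only [ip_add_left, E.ip_add_right, ip_smul_left, E.ip_smul_right]
  simp only [smul_add, smul_smul, star_neg, star_one]
  simp only [RCLike.star_def, Complex.conj_I]
  match_scalars <;> (simp; try ring_nf)

lemma continuous_ip (x : E.carrier) (k l : Fin n) : Continuous fun y => E.ip x y k l := by
  let f : E.carrier →ₗ[ℂ] B :=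
    { toFun := fun y => E.ip x y k l
      map_add' := fun y z => by rw [E.ip_add_right]; rfl
      map_smul' := fun c y => by rw [E.ip_smul_right]; rfl }
  have hb : ∀ y, ‖y‖ ≤ 1 → ‖f y‖ ≤ (1 + ‖x‖) ^ 2 := by
    intro y hy
    have h := congrArg (fun M : Matrix (Fin n) (Fin n) B => ‖M k l‖) (E.polar x y)
    simp only [Matrix.smul_apply, Matrix.add_apply, Matrix.sub_apply, norm_smul] at h
    have hz : ∀ z, ‖z‖ ≤ 1 + ‖x‖ → ‖E.ip z z k l‖ ≤ (1 + ‖x‖) ^ 2 := fun z hz =>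
      (E.norm_entry_le_sq z k l).trans (by gcongr)
    have a1 := hz (y + x) ((norm_add_le _ _).trans (by gcongr))
    have a2 := hz (y - x) ((norm_sub_le _ _).trans (by gcongr))
    have a3 := hz (y + Complex.I • x) ((norm_add_le _ _).trans (by rw [norm_smul]; simpa using hy))
    have a4 := hz (y + (-Complex.I) • x)
      ((norm_add_le _ _).trans (by rw [norm_smul]; simpa using hy))
    have b1 := norm_sub_le (E.ip (y + x) (y + x) k l - E.ip (y - x) (y - x) k l
      + Complex.I • E.ip (y + Complex.I • x) (y + Complex.I • x) k l)
      (Complex.I • E.ip (y + (-Complex.I) • x) (y + (-Complex.I) • x) k l)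
    have b2 := norm_add_le (E.ip (y + x) (y + x) k l - E.ip (y - x) (y - x) k l)
      (Complex.I • E.ip (y + Complex.I • x) (y + Complex.I • x) k l)
    have b3 := norm_sub_le (E.ip (y + x) (y + x) k l) (E.ip (y - x) (y - x) k l)
    rw [norm_smul, Complex.norm_I, one_mul] at b1 b2
    have e4 : ‖(4 : ℂ)‖ = 4 := by norm_num
    rw [e4] at h
    change ‖E.ip x y k l‖ ≤ _
    linarith
  have hc : ∀ y, ‖f y‖ ≤ (1 + ‖x‖) ^ 2 * ‖y‖ := by
    intro y
    rcases eq_or_ne y 0 with rfl | hy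
    · simp
    have hy' : 0 < ‖y‖ := norm_pos_iff.mpr hy
    have := hb (((‖y‖⁻¹ : ℝ) : ℂ) • y) (by
      rw [norm_smul]; simp [hy'.ne'])
    rw [map_smul, norm_smul] at this
    simp only [Complex.norm_real, norm_inv, norm_norm] at this
    rwa [inv_mul_le_iff₀ hy', mul_comm] at this
  exact AddMonoidHomClass.continuous_of_bound f _ hc

lemma ip_rsmul_single (x e : E.carrier) (i j : Fin n) (b : B) (k l : Fin n) :
    E.ip x (E.rsmul e (Matrix.single i j b)) k l = if l = j then E.ip x e k i * b else 0 := by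
  rw [E.ip_rsmul_right]
  split_ifs with h
  · subst h; simp
  · rw [Matrix.mul_single_apply_of_ne]; exact h

lemma norm_sq_rsmul_single (e : E.carrier) (i j : Fin n) (b : B) :
    ‖E.rsmul e (Matrix.single i j b)‖ ^ 2 = ‖star b * E.ip e e i i * b‖ := by
  have h0 : ∀ k l, E.ip (E.rsmul e (Matrix.single i j b)) (E.rsmul e (Matrix.single i j b)) k l
      = if l = j then (if k = j then star b * E.ip e e i i * b else 0) else 0 := by
    intro k l
    rw [ip_rsmul_single, ip_rsmul_left]
    split_ifs with h1 h2
    · subst h2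
      simp [Matrix.star_eq_conjTranspose, Matrix.conjTranspose_single]
    · simp [Matrix.star_eq_conjTranspose, Matrix.conjTranspose_single, h2]
    · rfl
  have h1 := cstarMatNorm_single
    (E.ip (E.rsmul e (Matrix.single i j b)) (E.rsmul e (Matrix.single i j b))) j (by
      intro k l h
      rw [h0]
      rcases h with h | h <;> simp [h])
  rw [E.norm_eq, h1, Real.sq_sqrt (norm_nonneg _), h0]
  simp

lemma rsmul_sub (e : E.carrier) (M N : Matrix (Fin n) (Fin n) B) :
    E.rsmul e (M - N) = E.rsmul e M - E.rsmul e N := by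
  rw [eq_sub_iff_add_eq, ← E.rsmul_add_right, sub_add_cancel]

lemma exists_T (i j : Fin n) (e : E.carrier) : ∃ x : E.carrier, ∀ z k l,
    E.ip z x k l = if l = j then E.ip z e k i else 0 := by
  let _ := CStarAlgebra.spectralOrder B
  have _ := CStarAlgebra.spectralOrderedRing B
  have hl := CStarAlgebra.increasingApproximateUnit B
  set f : B → E.carrier := fun b => E.rsmul e (Matrix.single i j b) with hf
  set g := E.ip e e i i with hg
  have hd : ∀ b b', ‖b‖ ≤ 1 → ‖b'‖ ≤ 1 → dist (f b) (f b') ^ 2 ≤ 2 * dist (g * b) (g * b') := by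
    intro b b' hb hb'
    have : f b - f b' = E.rsmul e (Matrix.single i j (b - b')) := by
      rw [hf]
      simp only []
      rw [← rsmul_sub]
      congr 1
      ext k l
      simp only [Matrix.single, Matrix.of_apply, Matrix.sub_apply]
      split_ifs <;> simp
    rw [dist_eq_norm, this, norm_sq_rsmul_single, dist_eq_norm, ← mul_sub, mul_assoc]
    refine (norm_mul_le _ _).trans ?_
    gcongr
    rw [norm_star]
    refine (norm_sub_le _ _).trans (by linarith)
  have hc : Cauchy (Filter.map f (CStarAlgebra.approximateUnit B)) := by
    rw [Metric.cauchy_iff]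
    refine ⟨inferInstance, fun ε hε => ?_⟩
    have h1 := (Metric.tendsto_nhds.mp (hl.tendsto_mul_left g)) (ε ^ 2 / 8) (by positivity)
    have h2 := h1.and hl.eventually_norm
    refine ⟨f '' {b | dist (g * b) g < ε ^ 2 / 8 ∧ ‖b‖ ≤ 1}, Filter.image_mem_map h2, ?_⟩
    rintro _ ⟨b, ⟨hb1, hb2⟩, rfl⟩ _ ⟨b', ⟨hb1', hb2'⟩, rfl⟩
    have h3 := hd b b' hb2 hb2'
    have h4 := dist_triangle_right (g * b) (g * b') g
    nlinarith [dist_nonneg (x := f b) (y := f b')]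
  obtain ⟨x, hx⟩ := CompleteSpace.complete hc
  refine ⟨x, fun z k l => ?_⟩
  have h1 : Filter.Tendsto f (CStarAlgebra.approximateUnit B) (nhds x) := hx
  have h2 := ((E.continuous_ip z k l).tendsto x).comp h1
  refine tendsto_nhds_unique h2 ?_
  have h3 : ((fun y => E.ip z y k l) ∘ f) = fun b => if l = j then E.ip z e k i * b else 0 := by
    funext b
    exact E.ip_rsmul_single z e i j b k l
  rw [h3]
  split_ifs
  · exact hl.tendsto_mul_left _
  · exact tendsto_const_nhds

end Correspondence

namespace Correspondence

/-- The matrix-unit action on `E` (as multipliers). -/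
noncomputable def T (i j : Fin n) (e : E.carrier) : E.carrier := (E.exists_T i j e).choose

lemma ip_T (i j : Fin n) (e z : E.carrier) (k l : Fin n) :
    E.ip z (E.T i j e) k l = if l = j then E.ip z e k i else 0 :=
  (E.exists_T i j e).choose_spec z k l

lemma ip_T_left (i j : Fin n) (e z : E.carrier) (k l : Fin n) :
    E.ip (E.T i j e) z k l = if k = j then E.ip e z i l else 0 := by
  rw [← E.ip_star, Matrix.star_apply, ip_T]
  split_ifs
  · rw [← Matrix.star_apply, E.ip_star]
  · simp

/-- The corner of `E`. -/
def corner (o : Fin n) : Submodule ℂ E.carrier where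
  carrier := {x | ∀ z k l, l ≠ o → E.ip z x k l = 0}
  add_mem' := by
    intro x y hx hy z k l h
    rw [E.ip_add_right, Matrix.add_apply, hx z k l h, hy z k l h, add_zero]
  zero_mem' := by
    intro z k l _
    rw [ip_zero_right]; rfl
  smul_mem' := by
    intro c x hx z k l h
    rw [E.ip_smul_right, Matrix.smul_apply, hx z k l h, smul_zero]

lemma isClosed_corner (o : Fin n) : IsClosed (E.corner o : Set E.carrier) := by
  have : (E.corner o : Set E.carrier) = ⋂ z, ⋂ k, ⋂ l, ⋂ (_ : l ≠ o), {x | E.ip z x k l = 0} := by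
    ext x
    simp [corner]
  rw [this]
  exact isClosed_iInter fun z => isClosed_iInter fun k => isClosed_iInter fun l =>
    isClosed_iInter fun _ => isClosed_eq (E.continuous_ip z k l) continuous_const

lemma T_mem (i o : Fin n) (e : E.carrier) : E.T i o e ∈ E.corner o := by
  intro z k l h
  rw [ip_T, if_neg h]

lemma rsmul_single_mem (o : Fin n) (e : E.carrier) (b : B) :
    E.rsmul e (Matrix.single o o b) ∈ E.corner o := by
  intro z k l h
  rw [ip_rsmul_single, if_neg h]

lemma lsmul_mem (o : Fin n) (a : A) (e : E.carrier) (he : e ∈ E.corner o) :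
    E.lsmul a e ∈ E.corner o := by
  intro z k l h
  have := he (E.lsmul (star a) z) k l h
  rwa [E.ip_lsmul, star_star] at this

lemma ip_corner_left (o : Fin n) (x y : E.carrier) (hx : x ∈ E.corner o) (k l : Fin n)
    (h : k ≠ o) : E.ip x y k l = 0 := by
  rw [← E.ip_star, Matrix.star_apply, hx y l k h, star_zero]

lemma norm_corner (o : Fin n) (x : E.carrier) (hx : x ∈ E.corner o) :
    ‖x‖ = Real.sqrt ‖E.ip x x o o‖ := by
  rw [E.norm_eq, cstarMatNorm_single (E.ip x x) o]
  rintro k l (h | h)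
  · exact E.ip_corner_left o x x hx k l h
  · exact hx x k l h

lemma lsmul_T (i j : Fin n) (a : A) (e : E.carrier) :
    E.T i j (E.lsmul a e) = E.lsmul a (E.T i j e) := by
  apply E.ext_ip
  intro z k l
  have h : ∀ w, E.ip z (E.lsmul a w) = E.ip (E.lsmul (star a) z) w := by
    intro w; rw [E.ip_lsmul, star_star]
  rw [ip_T, h, h, ip_T]

lemma T_add (i j : Fin n) (x y : E.carrier) : E.T i j (x + y) = E.T i j x + E.T i j y := by
  apply E.ext_ip
  intro z k l
  rw [E.ip_add_right, Matrix.add_apply, ip_T, ip_T, ip_T, E.ip_add_right, Matrix.add_apply]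
  split_ifs <;> simp

lemma T_smul (i j : Fin n) (c : ℂ) (x : E.carrier) : E.T i j (c • x) = c • E.T i j x := by
  apply E.ext_ip
  intro z k l
  rw [E.ip_smul_right, Matrix.smul_apply, ip_T, ip_T, E.ip_smul_right, Matrix.smul_apply]
  split_ifs <;> simp

lemma T_corner (o : Fin n) (x : E.carrier) (hx : x ∈ E.corner o) : E.T o o x = x := by
  apply E.ext_ip
  intro z k l
  rw [ip_T]
  split_ifs with h
  · rw [h]
  · exact (hx z k l h).symm

lemma norm_T_le (o : Fin n) (x : E.carrier) : ‖E.T o o x‖ ≤ ‖x‖ := by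
  rw [E.norm_corner o _ (E.T_mem o o x), ip_T, if_pos rfl, ip_T_left, if_pos rfl]
  exact (Real.sqrt_le_left (norm_nonneg _)).mpr (E.norm_entry_le_sq x o o)

/-- Compression to the corner. -/
noncomputable def compr (o : Fin n) : E.carrier →L[ℂ] E.corner o :=
  LinearMap.mkContinuous
    { toFun := fun x => ⟨E.T o o x, E.T_mem o o x⟩
      map_add' := fun x y => Subtype.ext (E.T_add o o x y)
      map_smul' := fun c x => Subtype.ext (E.T_smul o o c x) } 1
    (fun x => by simpa using E.norm_T_le o x)

lemma compr_apply (o : Fin n) (x : E.carrier) : (E.compr o x : E.carrier) = E.T o o x := rfl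

/-- The correspondence on the corner. -/
noncomputable def cornerCorr (o : Fin n) : Correspondence A B fun b => ‖b‖ where
  carrier := E.corner o
  instComplete := (E.isClosed_corner o).completeSpace_coe
  lsmul a x := ⟨E.lsmul a x, E.lsmul_mem o a x x.2⟩
  rsmul x b := ⟨E.rsmul x (Matrix.single o o b), E.rsmul_single_mem o x b⟩
  ip x y := E.ip x y o o
  ip_add_right x y z := by
    rw [Submodule.coe_add, E.ip_add_right]; rfl
  ip_smul_right c x y := by
    rw [Submodule.coe_smul, E.ip_smul_right]; rfl
  ip_rsmul_right x y b := by
    simp only []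
    rw [ip_rsmul_single, if_pos rfl]
  ip_star x y := by
    rw [← Matrix.star_apply, E.ip_star]
  ip_nonneg x := by
    let _ := CStarAlgebra.spectralOrder B
    have _ := CStarAlgebra.spectralOrderedRing B
    rw [← CStarAlgebra.nonneg_iff_eq_star_mul_self]
    obtain ⟨c, hc⟩ := E.ip_nonneg x
    rw [hc, Matrix.mul_apply]
    exact Finset.sum_nonneg fun i _ => star_mul_self_nonneg (c i o)
  ip_definite x h := by
    have := E.norm_corner o x x.2
    rw [h, norm_zero, Real.sqrt_zero, norm_eq_zero] at this
    exact Subtype.ext this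
  norm_eq x := E.norm_corner o x x.2
  rsmul_add_left x y b := Subtype.ext (E.rsmul_add_left _ _ _)
  rsmul_add_right x b b' := Subtype.ext (by
    simp only [Matrix.single_add, E.rsmul_add_right, Submodule.coe_add])
  rsmul_rsmul x b b' := Subtype.ext (by
    simp only [E.rsmul_rsmul, Matrix.single_mul_single_same])
  lsmul_add a x y := Subtype.ext (E.lsmul_add _ _ _)
  lsmul_smul a c x := Subtype.ext (E.lsmul_smul _ _ _)
  lsmul_add_left a a' x := Subtype.ext (E.lsmul_add_left _ _ _)
  lsmul_lsmul a a' x := Subtype.ext (E.lsmul_lsmul _ _ _)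
  lsmul_bounded a := by
    obtain ⟨M, hM⟩ := E.lsmul_bounded a
    exact ⟨M, fun x => hM x⟩
  ip_lsmul a x y := by
    simp only [E.ip_lsmul]
  lsmul_rsmul a x b := Subtype.ext (E.lsmul_rsmul _ _ _)
  nondegenerate := by
    have hs : Function.Surjective (E.compr o) := fun x =>
      ⟨x, Subtype.ext (E.T_corner o x x.2)⟩
    have hd : Dense (↑(Submodule.span ℂ {y : E.carrier | ∃ a ξ, E.lsmul a ξ = y}) :
        Set E.carrier) := dense_iff_closure_eq.mpr E.nondegenerate
    have h2 := hs.denseRange.dense_image (E.compr o).continuous hd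
    rw [← dense_iff_closure_eq]
    refine h2.mono ?_
    have h3 : (Submodule.span ℂ {y : E.carrier | ∃ a ξ, E.lsmul a ξ = y}).map
        (E.compr o : E.carrier →ₗ[ℂ] E.corner o) ≤
        Submodule.span ℂ {y : E.corner o | ∃ (a : A) (ξ : E.corner o),
          (⟨E.lsmul a ξ, E.lsmul_mem o a ξ ξ.2⟩ : E.corner o) = y} := by
      rw [Submodule.map_span_le]
      rintro _ ⟨a, ξ, rfl⟩
      refine Submodule.subset_span ⟨a, E.compr o ξ, ?_⟩
      exact Subtype.ext (E.lsmul_T o o a ξ).symm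
    rintro _ ⟨y, hy, rfl⟩
    exact h3 (Submodule.mem_map_of_mem hy)

end Correspondence

end helpers

/-- **Decomposition of correspondences into `Matₙ(B)`.** Every C*-correspondence `E`
from `A` to `Matₙ(B)` is unitarily equivalent to an `n`-fold direct sum `Fⁿ` of a
C*-correspondence `F` from `A` to `B`, equipped with the canonical matrix operations. -/
theorem correspondence_to_matrix_algebra_eq_power (n : ℕ) (hn : 1 ≤ n)
    (E : Correspondence A (Matrix (Fin n) (Fin n) B) cstarMatNorm) :
    ∃ (F : Correspondence A B fun b => ‖b‖) (Ψ : E.carrier → (Fin n → F.carrier)),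
      Function.Bijective Ψ ∧
        (∀ e e', Ψ (e + e') = Ψ e + Ψ e') ∧
        (∀ (c : ℂ) e, Ψ (c • e) = c • Ψ e) ∧
        -- (i) the `(i,j)` entry of `⟨e, e'⟩` is `⟨Ψ(e)ᵢ, Ψ(e')ⱼ⟩_B`
        (∀ e e' (i j : Fin n), E.ip e e' i j = F.ip (Ψ e i) (Ψ e' j)) ∧
        -- (ii) the left `A`-action is diagonal
        (∀ (a : A) e (i : Fin n), Ψ (E.lsmul a e) i = F.lsmul a (Ψ e i)) ∧
        -- (iii) the right `Matₙ(B)`-action is matrix multiplication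
        (∀ e (M : Matrix (Fin n) (Fin n) B) (i : Fin n),
          Ψ (E.rsmul e M) i = ∑ j, F.rsmul (Ψ e j) (M j i)) := by
  let o : Fin n := ⟨0, hn⟩
  let Ψ : E.carrier → (Fin n → E.corner o) := fun e i => ⟨E.T i o e, E.T_mem i o e⟩
  refine ⟨E.cornerCorr o, Ψ, ⟨?_, ?_⟩, ?_, ?_, ?_, ?_, ?_⟩
  · intro x y h
    apply E.ext_ip
    intro z k l
    have h1 : E.T l o x = E.T l o y := congrArg Subtype.val (congrFun h l)
    have h2 := congrArg (fun w => E.ip z w k o) h1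
    simpa [E.ip_T] using h2
  · intro (f : Fin n → E.corner o)
    refine ⟨∑ i, E.T o i (f i : E.carrier), ?_⟩
    funext j
    apply Subtype.ext
    apply E.ext_ip
    intro z k l
    change E.ip z (E.T j o _) k l = _
    rw [E.ip_T]
    split_ifs with h
    · rw [E.ip_sum_right, Matrix.sum_apply, h, Finset.sum_eq_single j]
      · rw [E.ip_T, if_pos rfl]
      · intro i _ hi
        rw [E.ip_T, if_neg hi.symm]
      · simp
    · exact ((f j).2 z k l h).symm
  · intro x y
    funext i
    exact Subtype.ext (E.T_add i o x y)
  · intro c x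
    funext i
    exact Subtype.ext (E.T_smul i o c x)
  · intro x y i j
    change _ = E.ip (E.T i o x) (E.T j o y) o o
    rw [E.ip_T, if_pos rfl, E.ip_T_left, if_pos rfl]
  · intro a x i
    exact Subtype.ext (E.lsmul_T i o a x)
  · intro e M i
    have h : ((∑ j, (E.cornerCorr o).rsmul (Ψ e j) (M j i) : E.corner o) : E.carrier)
        = ∑ j, E.rsmul (E.T j o e) (Matrix.single o o (M j i)) :=
      Submodule.coe_sum _ _ _
    refine Subtype.ext (Eq.trans ?_ h.symm)
    change E.T i o (E.rsmul e M) = _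
    apply E.ext_ip
    intro z k l
    rw [E.ip_T, E.ip_sum_right, Matrix.sum_apply, E.ip_rsmul_right, Matrix.mul_apply]
    simp only [E.ip_rsmul_single, E.ip_T]
    split_ifs <;> simp

end Stmt14
end
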